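/- Let q be a prime power, k = 𝔽̄_q, and let C be the Dickson–Guralnick–Zieve curve with function field k(C). Every Galois point for C is 𝔽_q-rational: if P ∈ ℙ²(k) is such that the field extension k(C) / π_P^* k(ℙ¹) induced by the projection π_P from P is Galois, then P ∈ ℙ²(𝔽_q). That is, Δ(C) ⊆ ℙ²(𝔽_q). -/

import Mathlib

/-!
Notation: `q = p ^ n`, `F = D₁ / D₂`, and `Φ` is the `q`-power Frobenius acting on coordinates.
So `D₁(u) = det(u, Φu, Φ³u)` and `D₂(u) = det(u, Φu, Φ²u)`.

**A necessary condition.** Complete `P` to a frame `P, Q₁, Q₂`; the lines through `P` are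
parametrised by `S`, the points of such a line being `P + Y (Q₁ + S Q₂)`. Restricting `F` gives
`Y ^ μ * G(S, Y)` with `Y ∤ G`, and `G = 0` is a plane model of `C` on which the projection from `P`
is the coordinate `S`. If `k(C) / k(S)` is normal, then `G`, as a polynomial in `Y` over `k(S)`,
splits into linear factors over `k(C)`. Suppose that `G(0, Y)` has a simple root `ω`. The local ring
of the model at `(0, ω)` is then a discrete valuation ring with uniformiser `S` and residue field
`k`, and factoring `G` into linear factors over it shows that a root `δ` of `G(0, Y)` of multiplicity
`m` forces `S ^ m ∣ G(S, δ)` (`core_mult`, `galois_crit`). This is an elementary form of the fact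
that one unramified place of a Galois extension forces all places over the same point to be
unramified. The resulting condition on `P` is `Crit F P`; it only involves the polynomial `F`, and
it is invariant under `GL₃(𝔽_q)` and under scaling.

**Tangent lines.** Since the derivative kills `q`-th powers, differentiating `D₂ F = D₁` shows that
at a point `v` of `C` with `D₂(v) ≠ 0` the curve is smooth with tangent line `det(·, Φv, Φ³v) = 0`
(`IsDGZ.deriv_eq`); it passes through `Φv` and `Φ³v`. Hence if `P`, `v`, `w` are distinct collinear
points with `v`, `w` of this kind and `P` lies on the tangent line at `v` but not on that at `w`, then
the projection from `P` is unramified at `w` and ramified at `v`, so `Crit F P` fails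
(`smooth_pair`).

**Non-rational points violate the criterion.** We may assume `P = [1 : a : b]`.
* If `D₂(P) = 0`, then `P` lies on an `𝔽_q`-line, and a rational change of coordinates gives
  `P = [1 : α : 0]`. For `α ∈ 𝔽_{q²} \ 𝔽_q` the line `z = 0` already provides `ω` and `δ`
  (`not_crit_quad`). For `α ∉ 𝔽_{q²}` a counting argument on the dual plane finds a point `v` as above
  with `P` on the line joining `v` and `Φv` (`not_crit_quad'`, through `not_crit_of_dual`).
* If `D₂(P) ≠ 0` and `D₁(P) ≠ 0`, the same counting argument applies (`not_crit_indep`).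
* If `D₂(P) ≠ 0` and `D₁(P) = 0`, write `P = Φv` with `Φ³v = a v + b Φv` and `a ≠ 0`. When `b ≠ 0`,
  the points `v`, `P`, `Φ³v` are collinear and `smooth_pair` applies (`not_crit_generic`); when
  `b = 0`, the tangent line at the smooth point `P` gives the contradiction (`not_crit_cycle`).
-/

open MvPolynomial

/-- The algebraic closure `k = 𝔽̄_q` of `𝔽_q`, `q = p^n`. -/
noncomputable abbrev DGZ_k (p n : ℕ) [Fact p.Prime] : Type :=
  AlgebraicClosure (GaloisField p n)

/-- The determinant `D₁ = det [[x, x^q, x^{q³}], [y, y^q, y^{q³}], [z, z^q, z^{q³}]]`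
over the finite field `𝔽_q` with `q = p^n`. -/
noncomputable def DGZ_D1 (p n : ℕ) [Fact p.Prime] : MvPolynomial (Fin 3) (GaloisField p n) :=
  Matrix.det (Matrix.of fun i j : Fin 3 =>
    (X i : MvPolynomial (Fin 3) (GaloisField p n)) ^ (![1, p ^ n, (p ^ n) ^ 3] j))

/-- The determinant `D₂ = det [[x, x^q, x^{q²}], [y, y^q, y^{q²}], [z, z^q, z^{q²}]]`
over the finite field `𝔽_q` with `q = p^n`. -/
noncomputable def DGZ_D2 (p n : ℕ) [Fact p.Prime] : MvPolynomial (Fin 3) (GaloisField p n) :=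
  Matrix.det (Matrix.of fun i j : Fin 3 =>
    (X i : MvPolynomial (Fin 3) (GaloisField p n)) ^ (![1, p ^ n, (p ^ n) ^ 2] j))

/-- The defining polynomial of the DGZ curve, regarded over the algebraic closure `k = 𝔽̄_q`. -/
noncomputable def DGZ_Fbar (p n : ℕ) [Fact p.Prime]
    (F : MvPolynomial (Fin 3) (GaloisField p n)) :
    MvPolynomial (Fin 3) (DGZ_k p n) :=
  MvPolynomial.map (algebraMap (GaloisField p n) (AlgebraicClosure (GaloisField p n))) F

/-- The dehomogenization `f(X, Y) = F(X, Y, 1) ∈ k[X, Y]` of the defining polynomial of the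
DGZ curve. -/
noncomputable def DGZ_affine (p n : ℕ) [Fact p.Prime]
    (F : MvPolynomial (Fin 3) (GaloisField p n)) : MvPolynomial (Fin 2) (DGZ_k p n) :=
  MvPolynomial.aeval ![X 0, X 1, 1] (DGZ_Fbar p n F)

/-- `P = [v] ∈ ℙ²(k)` is a Galois point for the DGZ curve `C`.  Here the function field
`k(C)` is presented as a field `L` with a `k`-algebra map `φ : k[X,Y] → L` (to be assumed
to have kernel `(F(X,Y,1))` and fraction-generating image), a linear form `a₀x + a₁y + a₂z`
vanishing at `P` restricts on the chart `z = 1` to `φ(a₀X + a₁Y + a₂)`, and `P` is a Galois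
point if for any two linearly independent linear forms `L₁, L₂` vanishing at `P` the
extension `k(C) / k(L₁/L₂)` is Galois. -/
def DGZ_IsGaloisPoint (p n : ℕ) [Fact p.Prime]
    (L : Type) [Field L] [Algebra (DGZ_k p n) L]
    (φ : MvPolynomial (Fin 2) (DGZ_k p n) →ₐ[DGZ_k p n] L)
    (v : Fin 3 → DGZ_k p n) : Prop :=
  ∀ a b : Fin 3 → DGZ_k p n,
    (∑ i : Fin 3, a i * v i = 0) → (∑ i : Fin 3, b i * v i = 0) →
    LinearIndependent (DGZ_k p n) ![a, b] →
    IsGalois ↥(IntermediateField.adjoin (DGZ_k p n)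
      {φ (C (a 0) * X 0 + C (a 1) * X 1 + C (a 2)) /
        φ (C (b 0) * X 0 + C (b 1) * X 1 + C (b 2))}) L

/-! ### Normal extensions and unramified places -/

/-- Let `O` be a valuation ring whose maximal ideal is generated by `π`. A product of linear factors
over the fraction field `L` is, up to a nonzero scalar, a polynomial `Q` over `O` that is nonzero modulo
`π`, and the multiplicity of the reduction of `d` as a root of `Q mod π` bounds the `π`-adic order
of `Q(d)` from below. Each linear factor contributes at most one to the former and, when it does
contribute, at least one to the latter. -/
theorem dvr_split_prod {O L : Type*} [CommRing O] [IsDomain O] [ValuationRing O] [Field L]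
    [Algebra O L] [IsFractionRing O L] (π : O)
    (hπ : ∀ x ∈ IsLocalRing.maximalIdeal O, π ∣ x) (s : Multiset L) :
    ∃ (c : L) (Q : Polynomial O), c ≠ 0 ∧
      Q.map (algebraMap O L) = Polynomial.C c * (s.map fun y => Polynomial.X - Polynomial.C y).prod ∧
      Q.map (IsLocalRing.residue O) ≠ 0 ∧
      ∀ d : O, π ^ (Q.map (IsLocalRing.residue O)).rootMultiplicity (IsLocalRing.residue O d) ∣
        Q.eval d := by
  induction s using Multiset.induction_on with
  | empty => exact ⟨1, 1, one_ne_zero, by simp, by simp, fun d => by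
      rw [Polynomial.map_one, ← Polynomial.C_1, Polynomial.rootMultiplicity_C]; simp⟩
  | cons y s ih =>
    obtain ⟨c, Q, hc, hQ, hQ0, hd⟩ := ih
    -- a linear factor `a T - b` over `O`, nonzero modulo the maximal ideal, with root `y`
    obtain ⟨a, b, e, he, hab, hl⟩ : ∃ (a b : O) (e : L), e ≠ 0 ∧
        (Polynomial.C (algebraMap O L a) * Polynomial.X - Polynomial.C (algebraMap O L b)
          = Polynomial.C e * (Polynomial.X - Polynomial.C y)) ∧ (a = 1 ∨ b = 1) := by
      rcases ValuationRing.isInteger_or_isInteger O y with ⟨b, hb⟩ | ⟨a, ha⟩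
      · exact ⟨1, b, 1, one_ne_zero, by simp [hb], Or.inl rfl⟩
      · by_cases hy : y = 0
        · exact ⟨1, 0, 1, one_ne_zero, by simp [hy], Or.inl rfl⟩
        · refine ⟨a, 1, y⁻¹, inv_ne_zero hy, ?_, Or.inr rfl⟩
          rw [ha, mul_sub, ← Polynomial.C_mul, inv_mul_cancel₀ hy]; simp
    set l : Polynomial O := Polynomial.C a * Polynomial.X - Polynomial.C b with hldef
    have hl0 : l.map (IsLocalRing.residue O) ≠ 0 := by
      intro h
      have h0 := congrArg (fun f => Polynomial.coeff f 0) h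
      have h1 := congrArg (fun f => Polynomial.coeff f 1) h
      simp [hldef, Polynomial.coeff_X, Polynomial.coeff_C] at h0 h1
      rcases hl with rfl | rfl
      · simp at h1
      · simp at h0
    refine ⟨e * c, l * Q, mul_ne_zero he hc, ?_, ?_, ?_⟩
    · rw [Polynomial.map_mul, hQ]
      simp only [hldef, Polynomial.map_sub, Polynomial.map_mul, Polynomial.map_C, Polynomial.map_X,
        hab, Multiset.map_cons, Multiset.prod_cons, Polynomial.C_mul]
      ring
    · rw [Polynomial.map_mul]; exact mul_ne_zero hl0 hQ0
    · intro d
      rw [Polynomial.map_mul, Polynomial.rootMultiplicity_mul (mul_ne_zero hl0 hQ0), pow_add,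
        Polynomial.eval_mul]
      refine mul_dvd_mul ?_ (hd d)
      by_cases hr : (l.map (IsLocalRing.residue O)).IsRoot (IsLocalRing.residue O d)
      · have hdeg : (l.map (IsLocalRing.residue O)).natDegree ≤ 1 := by
          refine Polynomial.natDegree_map_le.trans ?_
          rw [hldef]; compute_degree
        have h1 : (l.map (IsLocalRing.residue O)).rootMultiplicity (IsLocalRing.residue O d) ≤ 1 := by
          classical
          rw [← Polynomial.count_roots]
          exact ((Multiset.count_le_card _ _).trans (Polynomial.card_roots' _)).trans hdeg
        refine (pow_dvd_pow _ h1).trans ?_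
        rw [pow_one]
        apply hπ
        rw [← IsLocalRing.residue_eq_zero_iff]
        rw [Polynomial.IsRoot, Polynomial.eval_map_apply] at hr
        exact hr
      · rw [Polynomial.rootMultiplicity_eq_zero hr]; simp

/-- The bound of `dvr_split_prod` for an arbitrary polynomial over `O` that splits over `L` and is
nonzero modulo `π`: it differs from the `Q` of that lemma by a unit of `O`. -/
theorem dvr_mult {O L : Type*} [CommRing O] [IsDomain O] [ValuationRing O] [Field L]
    [Algebra O L] [IsFractionRing O L] (π : O)
    (hπ : ∀ x ∈ IsLocalRing.maximalIdeal O, π ∣ x) (g : Polynomial O)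
    (hs : (g.map (algebraMap O L)).Splits) (hg : g.map (IsLocalRing.residue O) ≠ 0)
    (d : O) (m : ℕ)
    (hm : (Polynomial.X - Polynomial.C (IsLocalRing.residue O d)) ^ m ∣
      g.map (IsLocalRing.residue O)) :
    π ^ m ∣ g.eval d := by
  obtain ⟨c, Q, hc, hQ, hQ0, hd⟩ := dvr_split_prod (L := L) π hπ (g.map (algebraMap O L)).roots
  have hm' := (Polynomial.le_rootMultiplicity_iff hg).2 hm
  refine (pow_dvd_pow π hm').trans ?_
  have hg' := hs.eq_prod_roots
  generalize (g.map (algebraMap O L)).roots = rs at hQ hg'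
  have hinj : Function.Injective (Polynomial.map (algebraMap O L)) :=
    Polynomial.map_injective _ (IsFractionRing.injective O L)
  set lc := (g.map (algebraMap O L)).leadingCoeff
  rcases ValuationRing.isInteger_or_isInteger O (lc / c) with ⟨a, ha⟩ | ⟨a, ha⟩
  · have : g = Polynomial.C a * Q := by
      apply hinj
      rw [Polynomial.map_mul, hQ, Polynomial.map_C, ha, ← mul_assoc, ← Polynomial.C_mul,
        div_mul_cancel₀ _ hc]
      exact hg'
    have ha0 : IsLocalRing.residue O a ≠ 0 := by
      intro h; apply hg; rw [this]; simp [h]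
    have h2 : (g.map (IsLocalRing.residue O)).rootMultiplicity (IsLocalRing.residue O d) =
        (Q.map (IsLocalRing.residue O)).rootMultiplicity (IsLocalRing.residue O d) := by
      rw [this, Polynomial.map_mul, Polynomial.rootMultiplicity_mul, Polynomial.map_C,
        Polynomial.rootMultiplicity_C, zero_add]
      rw [← Polynomial.map_mul, ← this]; exact hg
    rw [h2, this, Polynomial.eval_mul]
    exact (hd d).mul_left _
  · have hlc : lc ≠ 0 := by
      rw [Polynomial.leadingCoeff_ne_zero]
      intro h; apply hg
      rw [hinj (h.trans (Polynomial.map_zero _).symm)]; simp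
    have : Polynomial.C a * g = Q := by
      apply hinj
      rw [Polynomial.map_mul, hQ, Polynomial.map_C, ha, hg', ← mul_assoc, ← Polynomial.C_mul,
        inv_div, div_mul_cancel₀ _ hlc]
    have ha0 : IsLocalRing.residue O a ≠ 0 := by
      intro h; apply hQ0; rw [← this]; simp [h]
    have hau : IsUnit a := by
      by_contra h
      exact ha0 ((IsLocalRing.residue_eq_zero_iff _).2 h)
    have h2 : (Q.map (IsLocalRing.residue O)).rootMultiplicity (IsLocalRing.residue O d) =
        (g.map (IsLocalRing.residue O)).rootMultiplicity (IsLocalRing.residue O d) := by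
      rw [← this, Polynomial.map_mul, Polynomial.rootMultiplicity_mul, Polynomial.map_C,
        Polynomial.rootMultiplicity_C, zero_add]
      rw [← Polynomial.map_mul, this]; exact hQ0
    have h3 := hd d
    rw [h2, ← this, Polynomial.eval_mul, Polynomial.eval_C] at h3
    exact (hau.dvd_mul_left).1 h3

/-- The bound of `dvr_mult` for the local ring of a Noetherian domain `A` at a `k`-rational point
`e : A → k` (with `σ` the inclusion of constants), when `t` generates the maximal ideal of that local
ring. The conclusion is stated without localising: divisibility holds up to an `s` with `e s ≠ 0`. -/
theorem local_mult {A L k : Type*} [CommRing A] [IsDomain A] [IsNoetherianRing A] [Field L]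
    [Algebra A L] [IsFractionRing A L] [Field k] (e : A →+* k) (σ : k →+* A)
    (hσ : ∀ c, e (σ c) = c) (t : A) (ht0 : e t = 0)
    (ht : ∀ H : A, e H = 0 → ∃ s, e s ≠ 0 ∧ t ∣ s * H)
    (g : Polynomial A) (hs : (g.map (algebraMap A L)).Splits) (hg : g.map e ≠ 0)
    (d : A) (m : ℕ) (hm : (Polynomial.X - Polynomial.C (e d)) ^ m ∣ g.map e) :
    ∃ s, e s ≠ 0 ∧ t ^ m ∣ s * g.eval d := by
  set p : Ideal A := RingHom.ker e with hp
  have : p.IsPrime := RingHom.ker_isPrime e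
  let O := Localization.AtPrime p
  have hmem : ∀ {a : A}, a ∈ p ↔ e a = 0 := fun {a} => RingHom.mem_ker
  have hle : p.primeCompl ≤ nonZeroDivisors A := Ideal.primeCompl_le_nonZeroDivisors p
  let lft : O →+* L := IsLocalization.lift (M := p.primeCompl) (g := algebraMap A L) (by
    intro s
    rw [isUnit_iff_ne_zero]
    intro h0
    have := (map_eq_zero_iff _ (IsFractionRing.injective A L)).1 h0
    exact s.2 (by rw [this]; exact p.zero_mem))
  let : Algebra O L := lft.toAlgebra
  have : IsScalarTower A O L := IsScalarTower.of_algebraMap_eq fun a => by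
    change algebraMap A L a = lft _
    rw [IsLocalization.lift_eq]
  have : IsDomain O := IsLocalization.isDomain_of_le_nonZeroDivisors O hle
  have : IsFractionRing O L :=
    IsFractionRing.isFractionRing_of_isDomain_of_isLocalization p.primeCompl O L
  have : IsNoetherianRing O := IsLocalization.isNoetherianRing p.primeCompl O inferInstance
  have hmax : IsLocalRing.maximalIdeal O = Ideal.map (algebraMap A O) p :=
    (Localization.AtPrime.map_eq_maximalIdeal).symm
  have hunit : ∀ s, e s ≠ 0 → IsUnit (algebraMap A O s) := fun s h =>
    IsLocalization.map_units O (⟨s, fun h' => h (hmem.1 h')⟩ : p.primeCompl)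
  have hdvd : ∀ x ∈ IsLocalRing.maximalIdeal O, algebraMap A O t ∣ x := by
    intro x hx
    rw [hmax] at hx
    have : Ideal.map (algebraMap A O) p ≤ Ideal.span {algebraMap A O t} := by
      rw [Ideal.map_le_iff_le_comap]
      intro H hH
      obtain ⟨s, hs, hd⟩ := ht H (hmem.1 hH)
      rw [Ideal.mem_comap, Ideal.mem_span_singleton]
      have := map_dvd (algebraMap A O) hd
      rw [map_mul] at this
      exact ((hunit s hs).dvd_mul_left).1 this
    exact Ideal.mem_span_singleton.1 (this hx)
  have hres : ∀ a : A, e a = 0 → IsLocalRing.residue O (algebraMap A O a) = 0 := by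
    intro a ha
    rw [IsLocalRing.residue_eq_zero_iff, hmax]
    exact Ideal.mem_map_of_mem _ (hmem.2 ha)
  -- A Noetherian local domain with principal maximal ideal is a valuation ring.
  have : ValuationRing O := by
    have : (IsLocalRing.maximalIdeal O).IsPrincipal := by
      refine ⟨algebraMap A O t, le_antisymm ?_ ?_⟩
      · intro x hx
        exact Ideal.mem_span_singleton.2 (hdvd x hx)
      · rw [Submodule.span_singleton_le_iff_mem, hmax]
        exact Ideal.mem_map_of_mem _ (hmem.2 ht0)
    exact ((tfae_of_isNoetherianRing_of_isLocalRing_of_isDomain O).out 4 1).1 this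
  let ρ : k →+* IsLocalRing.ResidueField O :=
    ((IsLocalRing.residue O).comp (algebraMap A O)).comp σ
  have hρ : (IsLocalRing.residue O).comp (algebraMap A O) = ρ.comp e := by
    ext a
    have := hres (a - σ (e a)) (by rw [map_sub, hσ, sub_self])
    rw [map_sub, map_sub, sub_eq_zero] at this
    exact this
  have hgm : (g.map (algebraMap A O)).map (IsLocalRing.residue O) = (g.map e).map ρ := by
    rw [Polynomial.map_map, hρ, Polynomial.map_map]
  have key := dvr_mult (L := L) (algebraMap A O t) hdvd (g.map (algebraMap A O))
    (by rw [Polynomial.map_map, ← IsScalarTower.algebraMap_eq]; exact hs)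
    (by rw [hgm]; exact (Polynomial.map_ne_zero_iff ρ.injective).2 hg) (algebraMap A O d) m
    (by
      rw [hgm]
      have h1 := Polynomial.map_dvd ρ hm
      have h2 : IsLocalRing.residue O (algebraMap A O d) = ρ (e d) := congrArg (fun f => f d) hρ
      rw [h2]
      simpa using h1)
  rw [Polynomial.eval_map_apply, ← map_pow] at key
  obtain ⟨x, hx⟩ := key
  obtain ⟨⟨a, s⟩, hs⟩ := IsLocalization.surj p.primeCompl x
  refine ⟨s, fun h => s.2 (hmem.2 h), a, ?_⟩
  apply IsLocalization.injective O hle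
  rw [map_mul, map_mul, hx, ← hs]
  ring

/-- Evaluation of `H(S, Y) ∈ k[S][Y]` at `S = t`, `Y = y`. -/
noncomputable def ev2 {k L : Type*} [Field k] [CommRing L] [Algebra k L] (t y : L) :
    Polynomial (Polynomial k) →+* L :=
  Polynomial.eval₂RingHom (Polynomial.aeval t : Polynomial k →ₐ[k] L).toRingHom y

theorem ev2_apply {k L : Type*} [Field k] [CommRing L] [Algebra k L] (t y : L)
    (H : Polynomial (Polynomial k)) :
    ev2 t y H = (H.map (Polynomial.aeval t : Polynomial k →ₐ[k] L).toRingHom).eval y := by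
  simp [ev2, Polynomial.eval_map]

theorem ev2_C {k L : Type*} [Field k] [CommRing L] [Algebra k L] (t y : L) (c : Polynomial k) :
    ev2 t y (Polynomial.C c) = Polynomial.aeval t c := by
  rw [ev2_apply, Polynomial.map_C, Polynomial.eval_C]; rfl

/-- A polynomial over `k(t)` becomes, after multiplication by a nonzero `s(t)`, the specialisation at
`S = t` of some `H ∈ k[S][Y]`. -/
theorem clear_denoms {k L : Type*} [Field k] [Field L] [Algebra k L] (t : L)
    (P : Polynomial (IntermediateField.adjoin k {t})) :
    ∃ (s : Polynomial k) (H : Polynomial (Polynomial k)), Polynomial.aeval t s ≠ 0 ∧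
      H.map (Polynomial.aeval t : Polynomial k →ₐ[k] L).toRingHom =
        Polynomial.C (Polynomial.aeval t s) * P.map (algebraMap _ L) := by
  induction P using Polynomial.induction_on' with
  | add P Q hP hQ =>
    obtain ⟨s, H, hs, h⟩ := hP
    obtain ⟨s', H', hs', h'⟩ := hQ
    refine ⟨s * s', Polynomial.C s' * H + Polynomial.C s * H', ?_, ?_⟩
    · rw [map_mul]; exact mul_ne_zero hs hs'
    · rw [Polynomial.map_add, Polynomial.map_mul, Polynomial.map_mul, h, h', map_mul,
        Polynomial.map_add, Polynomial.map_C, Polynomial.map_C, Polynomial.C_mul]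
      simp only [AlgHom.toRingHom_eq_coe, RingHom.coe_coe]
      ring
  | monomial n a =>
    obtain ⟨r, s, h⟩ := (IntermediateField.mem_adjoin_simple_iff k _).1 a.2
    by_cases hs : Polynomial.aeval t s = 0
    · refine ⟨1, 0, by simp, ?_⟩
      rw [hs, div_zero] at h
      have : a = 0 := Subtype.ext h
      simp [this]
    · refine ⟨s, Polynomial.monomial n r, hs, ?_⟩
      rw [Polynomial.map_monomial, Polynomial.map_monomial, Polynomial.C_mul_monomial]
      congr 1
      change _ = _ * (a : L)
      rw [h]
      field_simp
      rfl

/-- If `L / k(t)` is normal and `G` divides every relation satisfied by `(t, y)`, then `G(t, Y)` splits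
over `L`, being a divisor of a multiple of the minimal polynomial of `y`. -/
theorem splits_of_normal {k L : Type*} [Field k] [Field L] [Algebra k L] (t y : L)
    [Normal (IntermediateField.adjoin k {t}) L] (G : Polynomial (Polynomial k))
    (hG : ∀ H : Polynomial (Polynomial k), ev2 t y H = 0 → G ∣ H) :
    (G.map (Polynomial.aeval t : Polynomial k →ₐ[k] L).toRingHom).Splits := by
  have hyint := Normal.isIntegral (F := IntermediateField.adjoin k {t}) inferInstance y
  obtain ⟨s, H, hs, h⟩ := clear_denoms t (minpoly (IntermediateField.adjoin k {t}) y)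
  have hd : G ∣ H := by
    apply hG
    rw [ev2_apply, h, Polynomial.eval_mul]
    have := minpoly.aeval (IntermediateField.adjoin k {t}) y
    rw [Polynomial.aeval_def, ← Polynomial.eval_map] at this
    rw [this, mul_zero]
  have hsp := Normal.splits (F := IntermediateField.adjoin k {t}) (K := L) inferInstance y
  have hne : (minpoly (IntermediateField.adjoin k {t}) y).map (algebraMap _ L) ≠ 0 :=
    (Polynomial.map_ne_zero_iff
      (algebraMap (IntermediateField.adjoin k {t}) L).injective).2 (minpoly.ne_zero hyint)
  refine Polynomial.Splits.of_dvd (g := Polynomial.C (Polynomial.aeval t s) *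
      (minpoly (IntermediateField.adjoin k {t}) y).map (algebraMap _ L)) ?_ ?_ ?_
  · exact (Polynomial.Splits.C _).mul hsp
  · exact mul_ne_zero (Polynomial.C_ne_zero.2 hs) hne
  · rw [← h]; exact Polynomial.map_dvd _ hd

/-- The ideal of the point `(0, ω)` in `k[S][Y]` is generated by `Y - ω` and `S`. -/
theorem sub_dvd_decomp {k : Type*} [Field k] (ω : k) (H : Polynomial (Polynomial k))
    (hH : (H.map (Polynomial.evalRingHom 0)).eval ω = 0) :
    ∃ H1 H2 : Polynomial (Polynomial k),
      H = (Polynomial.X - Polynomial.C (Polynomial.C ω)) * H1 + Polynomial.C Polynomial.X * H2 := by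
  obtain ⟨H1, h1⟩ := Polynomial.X_sub_C_dvd_sub_C_eval (a := Polynomial.C ω) (p := H)
  have h0 : (Polynomial.eval (Polynomial.C ω) H).eval 0 = 0 := by
    refine Eq.trans ?_ hH
    have := Polynomial.eval_map_apply (f := Polynomial.evalRingHom (0 : k)) (p := H)
      (Polynomial.C ω)
    have h2 : Polynomial.evalRingHom (0 : k) (Polynomial.C ω) = ω := by simp
    rw [h2] at this
    exact this.symm
  obtain ⟨r, hr⟩ : Polynomial.X ∣ Polynomial.eval (Polynomial.C ω) H := by
    rw [Polynomial.X_dvd_iff, Polynomial.coeff_zero_eq_eval_zero, h0]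
  refine ⟨H1, Polynomial.C r, ?_⟩
  rw [← Polynomial.C_mul, ← hr, ← h1]; ring

/-- If `k(t, y) / k(t)` is normal, where `(t, y)` is a generic point of the plane curve `G(S, Y) = 0`
and if the place `S = 0` of `k(t)` has one unramified preimage `(0, ω)`, then
the multiplicity of a root `δ` of `G(0, Y)` bounds the vanishing order of `G(S, δ)` at `S = 0`. -/
theorem core_mult {k L : Type*} [Field k] [Field L] [Algebra k L] (t y : L) (ht : t ≠ 0)
    [Normal (IntermediateField.adjoin k {t}) L] (G : Polynomial (Polynomial k))
    (hG : ∀ H : Polynomial (Polynomial k), ev2 t y H = 0 ↔ G ∣ H)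
    (hgen : ∀ x : L, ∃ a b : Polynomial (Polynomial k), ev2 t y b ≠ 0 ∧ x = ev2 t y a / ev2 t y b)
    (ω δ : k) (m : ℕ) (hω : (G.map (Polynomial.evalRingHom 0)).eval ω = 0)
    (hω' : (Polynomial.derivative (G.map (Polynomial.evalRingHom 0))).eval ω ≠ 0)
    (hδ : (Polynomial.X - Polynomial.C δ) ^ m ∣ G.map (Polynomial.evalRingHom 0)) :
    Polynomial.X ^ m ∣ G.eval (Polynomial.C δ) := by
  -- The coordinate ring `k[t, y]` of the model, with the point `e : A → k` at `(0, ω)`.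
  let A := (ev2 (k := k) t y).range
  let mk : Polynomial (Polynomial k) →+* A := (ev2 (k := k) t y).rangeRestrict
  have hκ : ∀ b, algebraMap A L (mk b) = ev2 t y b := fun b => rfl
  have hκinj : Function.Injective (algebraMap A L) := Subtype.val_injective
  have hmk : Function.Surjective mk := RingHom.rangeRestrict_surjective _
  have : IsNoetherianRing A := isNoetherianRing_of_surjective _ A mk hmk
  have : FaithfulSMul A L := (faithfulSMul_iff_algebraMap_injective A L).2 hκinj
  have hfr : IsFractionRing A L := by
    refine IsFractionRing.of_field A L ?_
    intro x
    obtain ⟨a, b, hb, hx⟩ := hgen x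
    exact ⟨mk a, mk b, hx⟩
  let e0 : Polynomial (Polynomial k) →+* k := (Polynomial.evalRingHom ω).comp (Polynomial.mapRingHom
    (Polynomial.evalRingHom 0))
  have he0 : ∀ b, e0 b = (b.map (Polynomial.evalRingHom 0)).eval ω := fun b => rfl
  have he0C : ∀ c, e0 (Polynomial.C c) = c.eval 0 := fun c => by
    rw [he0, Polynomial.map_C, Polynomial.eval_C]; rfl
  let e : A →+* k := mk.liftOfSurjective hmk ⟨e0, by
    intro b hb
    rw [RingHom.mem_ker] at hb ⊢
    have hb' : ev2 t y b = 0 := by rw [← hκ, hb, map_zero]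
    obtain ⟨c, rfl⟩ := (hG b).1 hb'
    rw [map_mul, he0, hω, zero_mul]⟩
  have he : ∀ b, e (mk b) = e0 b := RingHom.liftOfRightInverse_comp_apply _ _ _ _
  let σ : k →+* A := mk.comp (Polynomial.C.comp Polynomial.C)
  let T : A := mk (Polynomial.C Polynomial.X)
  have hmG : mk G = 0 := by
    apply hκinj
    rw [hκ, map_zero]
    exact (hG G).2 dvd_rfl
  obtain ⟨G1, G2, hG12⟩ := sub_dvd_decomp ω G hω
  -- This is the simplicity of the root `ω` of `G(0, Y)`.
  have hG1 : e0 G1 ≠ 0 := by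
    rw [hG12] at hω'
    rw [he0]
    simpa using hω'
  -- `G = (Y - ω) G₁ + S G₂` vanishes in `A` and `G₁(0, ω) ≠ 0`, so `S` generates the maximal ideal
  -- of the local ring at `(0, ω)`.
  have hsub : ∀ H : A, e H = 0 → ∃ s, e s ≠ 0 ∧ T ∣ s * H := by
    intro H hH
    obtain ⟨H, rfl⟩ := hmk H
    obtain ⟨H1, H2, hH12⟩ := sub_dvd_decomp ω H (by rw [← he0, ← he]; exact hH)
    refine ⟨mk G1, by rw [he]; exact hG1, mk (G1 * H2 - H1 * G2), ?_⟩
    rw [← map_mul, ← map_mul, ← sub_eq_zero, ← map_sub]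
    have : G1 * H - Polynomial.C Polynomial.X * (G1 * H2 - H1 * G2) = H1 * G := by
      rw [hH12]; linear_combination (-H1) * hG12
    rw [this, map_mul, hmG, mul_zero]
  let g : Polynomial A := G.map (mk.comp Polynomial.C)
  have hge : g.map e = G.map (Polynomial.evalRingHom 0) := by
    rw [Polynomial.map_map]
    congr 1
    ext c
    · change e (mk _) = _; rw [he, he0C]; simp
    · change e (mk _) = _; rw [he, he0C]; simp
  have hgκ : g.map (algebraMap A L) =
      G.map (Polynomial.aeval t : Polynomial k →ₐ[k] L).toRingHom := by
    rw [Polynomial.map_map]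
    congr 1
    ext c
    · change algebraMap A L (mk _) = _
      rw [hκ, ev2_C]; simp
    · change algebraMap A L (mk _) = _
      rw [hκ, ev2_C]; simp
  have hdδ : e (mk (Polynomial.C (Polynomial.C δ))) = δ := by rw [he, he0C]; simp
  obtain ⟨s, hs, hdvd⟩ := local_mult (L := L) e σ (fun c => by
      change e (mk (Polynomial.C (Polynomial.C c))) = _
      rw [he, he0C]; simp) T (by change e (mk _) = _; rw [he, he0C]; simp) hsub g
    (by rw [hgκ]; exact splits_of_normal t y G fun H h => (hG H).1 h)
    (by
      rw [hge]
      intro h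
      rw [h] at hω'
      simp at hω')
    (mk (Polynomial.C (Polynomial.C δ))) m (by rw [hge, hdδ]; exact hδ)
  have hev : g.eval (mk (Polynomial.C (Polynomial.C δ))) =
      mk (Polynomial.C (G.eval (Polynomial.C δ))) :=
    Polynomial.eval_map_apply (f := mk.comp Polynomial.C) (p := G) (Polynomial.C δ)
  rw [hev] at hdvd
  by_cases h0 : G.eval (Polynomial.C δ) = 0
  · rw [h0]; exact dvd_zero _
  -- Write `G(S, δ) = S ^ j * h₁` with `h₁(0) ≠ 0`; if `j < m`, then `s * h₁` would be divisible by `t`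
  -- in `A`, although it does not vanish at `(0, ω)`.
  obtain ⟨h1, hh, hnd⟩ := Polynomial.exists_eq_pow_rootMultiplicity_mul_and_not_dvd _ h0 0
  set j := (Polynomial.eval (Polynomial.C δ) G).rootMultiplicity 0
  rw [Polynomial.C_0, sub_zero] at hh hnd
  by_cases hj : m ≤ j
  · rw [hh]; exact (pow_dvd_pow _ hj).mul_right _
  exfalso
  push Not at hj
  have hT : T ≠ 0 := by
    intro h
    apply ht
    have := congrArg (algebraMap A L) h
    rw [hκ, map_zero, ev2_apply] at this
    simpa using this
  obtain ⟨r, hr⟩ := hdvd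
  rw [hh] at hr
  have hr' : s * mk (Polynomial.C h1) = T ^ (m - j) * r := by
    have h2 : T ^ m = T ^ j * T ^ (m - j) := by rw [← pow_add]; congr 1; omega
    apply mul_left_cancel₀ (pow_ne_zero j hT)
    rw [← mul_assoc (T ^ j) (T ^ (m - j)), ← h2, ← hr, Polynomial.C_mul, map_mul, Polynomial.C_pow,
      map_pow]
    ring
  have h3 := congrArg e hr'
  have heT : e T = 0 := by change e (mk _) = _; rw [he, he0C]; simp
  rw [map_mul, map_mul, map_pow, heT, zero_pow (by omega), zero_mul] at h3
  rcases mul_eq_zero.1 h3 with h | h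
  · exact hs h
  · apply hnd
    rw [Polynomial.X_dvd_iff, Polynomial.coeff_zero_eq_eval_zero]
    simpa [he, he0] using h

/-! ### The forms D₁, D₂ and the polynomial F -/

/-- `det3 a b c` is the determinant of the matrix with rows `a, b, c`. -/
def det3 {A : Type*} [CommRing A] (a b c : Fin 3 → A) : A :=
  a 0 * (b 1 * c 2 - b 2 * c 1) - a 1 * (b 0 * c 2 - b 2 * c 0) + a 2 * (b 0 * c 1 - b 1 * c 0)

/-- The form `D₁`, evaluated at `u`. -/
def d1 {A : Type*} [CommRing A] (q : ℕ) (u : Fin 3 → A) : A := det3 u (u ^ q) (u ^ q ^ 3)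

/-- The form `D₂`, evaluated at `u`. -/
def d2 {A : Type*} [CommRing A] (q : ℕ) (u : Fin 3 → A) : A := det3 u (u ^ q) (u ^ q ^ 2)

/-- `F = D₁ / D₂`. -/
def IsDGZ {k : Type*} [Field k] (q : ℕ) (F : MvPolynomial (Fin 3) k) : Prop :=
  d2 q (X : Fin 3 → MvPolynomial (Fin 3) k) * F = d1 q X

/-- `q` is a positive power of `p`. -/
def IsPow (p q : ℕ) : Prop := ∃ n, 0 < n ∧ q = p ^ n

theorem map_det3 {A B : Type*} [CommRing A] [CommRing B] (f : A →+* B) (a b c : Fin 3 → A) :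
    f (det3 a b c) = det3 (fun i => f (a i)) (fun i => f (b i)) (fun i => f (c i)) := by
  simp [det3]

theorem map_d1 {A B : Type*} [CommRing A] [CommRing B] (f : A →+* B) (q : ℕ) (u : Fin 3 → A) :
    f (d1 q u) = d1 q (fun i => f (u i)) := by
  simp [d1, det3]

theorem map_d2 {A B : Type*} [CommRing A] [CommRing B] (f : A →+* B) (q : ℕ) (u : Fin 3 → A) :
    f (d2 q u) = d2 q (fun i => f (u i)) := by
  simp [d2, det3]

section frob

theorem IsPow.add_pow {p q : ℕ} [Fact p.Prime] (hq : IsPow p q) {A : Type*} [CommRing A]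
    [CharP A p] (a b : A) (j : ℕ) : (a + b) ^ q ^ j = a ^ q ^ j + b ^ q ^ j := by
  obtain ⟨n, -, rfl⟩ := hq
  rw [← pow_mul]; exact add_pow_char_pow a b p _

theorem IsPow.sub_pow {p q : ℕ} [Fact p.Prime] (hq : IsPow p q) {A : Type*} [CommRing A]
    [CharP A p] (a b : A) (j : ℕ) : (a - b) ^ q ^ j = a ^ q ^ j - b ^ q ^ j := by
  obtain ⟨n, -, rfl⟩ := hq
  rw [← pow_mul]; exact sub_pow_char_pow a b _

theorem IsPow.one_lt {p q : ℕ} [hp : Fact p.Prime] (hq : IsPow p q) : 1 < q := by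
  obtain ⟨n, hn, rfl⟩ := hq
  exact Nat.one_lt_pow hn.ne' hp.out.one_lt

theorem IsPow.cast {p q : ℕ} (hq : IsPow p q) (A : Type*) [CommRing A]
    [CharP A p] : (q : A) = 0 := by
  obtain ⟨n, hn, rfl⟩ := hq
  rw [Nat.cast_pow, CharP.cast_eq_zero, zero_pow hn.ne']

theorem det3_pow {p q : ℕ} [Fact p.Prime] (hq : IsPow p q) {A : Type*} [CommRing A]
    [CharP A p] (a b c : Fin 3 → A) (j : ℕ) :
    det3 (a ^ q ^ j) (b ^ q ^ j) (c ^ q ^ j) = det3 a b c ^ q ^ j := by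
  simp only [det3, hq.add_pow, hq.sub_pow, mul_pow, Pi.pow_apply]

theorem det3_pow1 {p q : ℕ} [Fact p.Prime] (hq : IsPow p q) {A : Type*} [CommRing A]
    [CharP A p] (a b c : Fin 3 → A) :
    det3 (a ^ q) (b ^ q) (c ^ q) = det3 a b c ^ q := by
  simpa using det3_pow hq a b c 1

theorem IsPow.pow_inj {p q : ℕ} [Fact p.Prime] (hq : IsPow p q) {k : Type*} [Field k]
    [CharP k p] {a b : k} {j : ℕ} (h : a ^ q ^ j = b ^ q ^ j) : a = b := by
  rw [← sub_eq_zero, ← hq.sub_pow] at h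
  exact sub_eq_zero.1 (eq_zero_of_pow_eq_zero h)

end frob

theorem exists_eval_ne {k : Type*} [Field k] [Infinite k] (f : Polynomial k) (hf : f ≠ 0) :
    ∃ x, f.eval x ≠ 0 := by
  by_contra! h
  exact hf (Polynomial.funext (by simpa using h))

/-- The matrix `M` over `k` acting on a vector with entries in a `k`-algebra. -/
def act {k A : Type*} [Field k] [CommRing A] [Algebra k A] (M : Fin 3 → Fin 3 → k)
    (u : Fin 3 → A) : Fin 3 → A :=
  fun i => algebraMap k A (M i 0) * u 0 + algebraMap k A (M i 1) * u 1 + algebraMap k A (M i 2) * u 2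

theorem det3_act {k A : Type*} [Field k] [CommRing A] [Algebra k A] (M : Fin 3 → Fin 3 → k)
    (a b c : Fin 3 → A) :
    det3 (act M a) (act M b) (act M c) =
      algebraMap k A (det3 (M 0) (M 1) (M 2)) * det3 a b c := by
  simp only [det3, act, map_add, map_sub, map_mul]
  ring

section toolkit
variable {k : Type*} [Field k] {p q : ℕ} [Fact p.Prime] [CharP k p]
  {F : MvPolynomial (Fin 3) k}

theorem IsDGZ.aeval_eq (hF : IsDGZ q F) {A : Type*} [CommRing A] [Algebra k A] (u : Fin 3 → A) :
    d2 q u * aeval u F = d1 q u := by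
  have := congrArg (aeval (R := k) u).toRingHom hF
  rw [map_mul, map_d1, map_d2] at this
  simpa using this

theorem exists_pow_ne [Infinite k] {m : ℕ} (hm : 1 < m) : ∃ b : k, b ^ m ≠ b := by
  obtain ⟨b, hb⟩ := exists_eval_ne (Polynomial.X ^ m - Polynomial.X : Polynomial k)
    (FiniteField.X_pow_card_sub_X_ne_zero k hm)
  exact ⟨b, by simpa [sub_eq_zero] using hb⟩

omit [CharP k p] in
/-- Over an infinite field `D₂` does not vanish identically: take `[1 : b : c]` with `b` not fixed by
`Φ` and `c` outside the roots of the resulting nonzero polynomial. -/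
theorem exists_d2_ne [Infinite k] (hq : IsPow p q) : ∃ u : Fin 3 → k, d2 q u ≠ 0 := by
  have h1 := hq.one_lt
  have h2 : q < q ^ 2 := by nlinarith
  have h3 : ¬ 1 = q ^ 2 := by omega
  obtain ⟨b, hb⟩ := exists_pow_ne (k := k) h1
  set g : Polynomial k := Polynomial.C (b ^ q - b) * (Polynomial.X ^ q ^ 2 - Polynomial.X) -
    Polynomial.C (b ^ q ^ 2 - b) * (Polynomial.X ^ q - Polynomial.X) with hg
  have hgc : g.coeff (q ^ 2) = b ^ q - b := by
    simp [hg, Polynomial.coeff_X_pow, Polynomial.coeff_X, h2.ne', h3, -map_sub]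
  have hg0 : g ≠ 0 := by
    intro h
    rw [h, Polynomial.coeff_zero] at hgc
    exact hb (sub_eq_zero.1 hgc.symm)
  obtain ⟨c, hc⟩ := exists_eval_ne g hg0
  refine ⟨![1, b, c], ?_⟩
  convert hc using 1
  simp [hg, d2, det3]
  ring

omit [CharP k p] in
theorem d2_X_ne [Infinite k] (hq : IsPow p q) :
    d2 q (X : Fin 3 → MvPolynomial (Fin 3) k) ≠ 0 := by
  obtain ⟨u, hu⟩ := exists_d2_ne (k := k) hq
  intro h
  apply hu
  have := congrArg (aeval (R := k) u).toRingHom h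
  rw [map_d2, map_zero] at this
  simpa using this

theorem d1_smul {A : Type*} [CommRing A] (c : A) (u : Fin 3 → A) :
    d1 q (fun i => c * u i) = c ^ (1 + q + q ^ 3) * d1 q u := by
  simp only [d1, det3, Pi.pow_apply, mul_pow, pow_add, pow_one]; ring

theorem d2_smul {A : Type*} [CommRing A] (c : A) (u : Fin 3 → A) :
    d2 q (fun i => c * u i) = c ^ (1 + q + q ^ 2) * d2 q u := by
  simp only [d2, det3, Pi.pow_apply, mul_pow, pow_add, pow_one]; ring

omit [CharP k p] in
/-- `F` is homogeneous of degree `q³ - q²`. -/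
theorem IsDGZ.smul [Infinite k] (hq : IsPow p q) (hF : IsDGZ q F) {A : Type*} [CommRing A]
    [Algebra k A] (c : A) (u : Fin 3 → A) :
    aeval (fun i => c * u i) F = c ^ (q ^ 3 - q ^ 2) * aeval u F := by
  let P := Polynomial (MvPolynomial (Fin 3) k)
  have hle : q ^ 2 ≤ q ^ 3 := Nat.pow_le_pow_right hq.one_lt.le (by norm_num)
  let Y : Fin 3 → P := fun i => Polynomial.C (X i)
  have hY : aeval Y F = Polynomial.C F := by
    have h1 : (aeval Y).toRingHom = (Polynomial.C : MvPolynomial (Fin 3) k →+* P) := by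
      apply MvPolynomial.ringHom_ext
      · intro r; simp [Y]; rfl
      · intro i; simp [Y]
    exact congrArg (fun f => f F) h1
  have hd2Y : d2 q Y ≠ 0 := by
    have := map_d2 (Polynomial.C : MvPolynomial (Fin 3) k →+* P) q X
    rw [← this]
    exact Polynomial.C_ne_zero.2 (d2_X_ne hq)
  have gen : aeval (fun i => (Polynomial.X : P) * Y i) F =
      (Polynomial.X : P) ^ (q ^ 3 - q ^ 2) * aeval Y F := by
    have h1 := hF.aeval_eq (fun i => (Polynomial.X : P) * Y i)
    have h2 := hF.aeval_eq Y
    rw [d1_smul, d2_smul, ← h2] at h1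
    have hX : (Polynomial.X : P) ^ (1 + q + q ^ 2) * d2 q Y ≠ 0 :=
      mul_ne_zero (pow_ne_zero _ Polynomial.X_ne_zero) hd2Y
    apply mul_left_cancel₀ hX
    rw [h1]
    have : 1 + q + q ^ 3 = (1 + q + q ^ 2) + (q ^ 3 - q ^ 2) := by omega
    rw [this, pow_add _ _ (q ^ 3 - q ^ 2)]
    ring
  let f : P →+* A := Polynomial.eval₂RingHom (aeval u : MvPolynomial (Fin 3) k →ₐ[k] A).toRingHom c
  let f' : P →ₐ[k] A := AlgHom.mk f (fun r => by
    change Polynomial.eval₂ _ _ (Polynomial.C (C r)) = _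
    simp)
  have hf := congrArg f' gen
  have hfX : f' (Polynomial.X : P) = c := by
    change Polynomial.eval₂ _ _ _ = _; simp
  have hfY : ∀ i, f' (Y i) = u i := fun i => by
    change Polynomial.eval₂ _ _ (Polynomial.C (X i)) = _; simp
  rw [map_mul, map_pow, hfX, ← AlgHom.comp_apply, ← AlgHom.comp_apply, comp_aeval, comp_aeval] at hf
  simp only [map_mul, hfX, hfY] at hf
  exact hf

/-- `F` is invariant under `GL₃(𝔽_q)`. -/
theorem IsDGZ.act_eq [Infinite k] (hq : IsPow p q) (hF : IsDGZ q F) (r : Fin 3 → Fin 3 → k)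
    (hr : ∀ i j, r i j ^ q = r i j) (hdet : det3 (r 0) (r 1) (r 2) ≠ 0) :
    aeval (act r (X : Fin 3 → MvPolynomial (Fin 3) k)) F = F := by
  have hpow : ∀ j, (act r (X : Fin 3 → MvPolynomial (Fin 3) k)) ^ q ^ j = act r (X ^ q ^ j) := by
    intro j
    have hr' : ∀ i l, r i l ^ q ^ j = r i l := by
      intro i l
      induction j with
      | zero => simp
      | succ j ih => rw [pow_succ, pow_mul, ih, hr]
    funext i
    simp only [act, Pi.pow_apply, hq.add_pow, mul_pow, ← map_pow, hr']
  have h1 := hF.aeval_eq (act r (X : Fin 3 → MvPolynomial (Fin 3) k))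
  have e1 := hpow 1
  rw [pow_one] at e1
  rw [d1, d2, e1, hpow 2, hpow 3, det3_act, det3_act] at h1
  change _ * d2 q X * _ = _ * d1 q X at h1
  rw [← hF, mul_assoc] at h1
  have h2 : algebraMap k (MvPolynomial (Fin 3) k) (det3 (r 0) (r 1) (r 2)) ≠ 0 := by
    simpa using hdet
  exact mul_left_cancel₀ (d2_X_ne hq) (mul_left_cancel₀ h2 h1)

omit [Fact p.Prime] in
theorem derivative_pow_q (hq : IsPow p q) (f : Polynomial k) {j : ℕ} (hj : j ≠ 0) :
    Polynomial.derivative (f ^ q ^ j) = 0 := by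
  rw [Polynomial.derivative_pow, Nat.cast_pow, hq.cast, zero_pow hj, map_zero, zero_mul, zero_mul]

/-- The polynomial parametrising the line `{a + X b}`. -/
noncomputable def line (a b : Fin 3 → k) : Fin 3 → Polynomial k :=
  fun i => Polynomial.C (a i) + Polynomial.X * Polynomial.C (b i)

theorem line_eval (a b : Fin 3 → k) (x : k) (i : Fin 3) :
    (line a b i).eval x = a i + x * b i := by
  simp only [line, Polynomial.eval_add, Polynomial.eval_mul, Polynomial.eval_C, Polynomial.eval_X]

theorem eval_line (a b : Fin 3 → k) (x : k) (G : MvPolynomial (Fin 3) k) :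
    (aeval (line a b) G).eval x = aeval (fun i => a i + x * b i) G := by
  have := comp_aeval (R := k) (f := line a b) (Polynomial.aeval x : Polynomial k →ₐ[k] k)
  have h2 := congrArg (fun f => f G) this
  simp only [AlgHom.comp_apply, Polynomial.coe_aeval_eq_eval, line_eval] at h2
  exact h2

omit [Fact p.Prime] in
/-- The derivative of `F` in the direction `b` at a point `u = a + x b` of `C`: as the derivatives of
`Φu` and `Φ³u` vanish, `D₂(u) · ∂F/∂b = det(b, Φu, Φ³u)`. When `D₂(u) ≠ 0`, the tangent line at `u`
is therefore `det(·, Φu, Φ³u) = 0`, provided this form is nonzero. -/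
theorem IsDGZ.deriv_eq (hq : IsPow p q) (hF : IsDGZ q F) (a b : Fin 3 → k) (x : k)
    (h0 : aeval (fun i => a i + x * b i) F = 0) :
    d2 q (fun i => a i + x * b i) * (Polynomial.derivative (aeval (line a b) F)).eval x =
      det3 b ((fun i => a i + x * b i) ^ q) ((fun i => a i + x * b i) ^ q ^ 3) := by
  have h1 := hF.aeval_eq (line a b)
  have h2 := congrArg (fun f => (Polynomial.derivative f).eval x) h1
  have e1 : ∀ i, Polynomial.derivative (line a b i ^ q) = 0 := fun i => by
    simpa using derivative_pow_q hq (line a b i) one_ne_zero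
  have e2 : ∀ i, Polynomial.derivative (line a b i ^ q ^ 3) = 0 := fun i =>
    derivative_pow_q hq (line a b i) (by norm_num)
  have e3 : ∀ i, Polynomial.derivative (line a b i) = Polynomial.C (b i) := fun i => by
    simp [line]
  have e4 : ∀ i, (line a b i).eval x = a i + x * b i := line_eval a b x
  have e5 : (d2 q (line a b)).eval x = d2 q (fun i => a i + x * b i) := by
    have := map_d2 (Polynomial.evalRingHom x) q (line a b)
    simpa [e4] using this
  simp only [Polynomial.derivative_mul, Polynomial.eval_add, Polynomial.eval_mul, e5] at h2
  rw [eval_line, h0, mul_zero, zero_add] at h2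
  rw [h2]
  simp only [d1, det3, Pi.pow_apply, Polynomial.derivative_add, Polynomial.derivative_sub, e1, e2, e3,
    Polynomial.derivative_mul, Polynomial.eval_add, Polynomial.eval_mul, e4, Polynomial.eval_sub,
    Polynomial.eval_pow, Polynomial.eval_C, Polynomial.eval_zero]
  ring

end toolkit

/-! ### The multiplicity criterion -/

theorem map_aeval_of {k A B : Type*} [Field k] [CommRing A] [CommRing B] [Algebra k A] [Algebra k B]
    (f : A →+* B) (hf : ∀ c, f (algebraMap k A c) = algebraMap k B c) (u : Fin 3 → A)
    (F : MvPolynomial (Fin 3) k) : f (aeval u F) = aeval (fun i => f (u i)) F := by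
  have := comp_aeval (R := k) (f := u) (AlgHom.mk f hf)
  exact congrArg (fun f => f F) this

/-- The point `P + Y (Q₁ + S Q₂)` with coordinates in `k[S][Y]`. -/
noncomputable def blow {k : Type*} [Field k] (P Q1 Q2 : Fin 3 → k) :
    Fin 3 → Polynomial (Polynomial k) := fun i =>
  Polynomial.C (Polynomial.C (P i)) + Polynomial.X * Polynomial.C (Polynomial.C (Q1 i) +
    Polynomial.X * Polynomial.C (Q2 i))

/-- The multiplicity criterion at `P`. For each frame `P, Q₁, Q₂` write
`F(P + Y (Q₁ + S Q₂)) = Y ^ μ * G(S, Y)` with `Y ∤ G`. If `G(0, Y)` has a simple root `ω`, then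
`S ^ m ∣ G(S, δ)` for every root `δ` of `G(0, Y)` of multiplicity at least `m`. -/
def Crit {k : Type*} [Field k] (F : MvPolynomial (Fin 3) k) (P : Fin 3 → k) : Prop :=
  ∀ (Q1 Q2 : Fin 3 → k), det3 P Q1 Q2 ≠ 0 → ∀ (μ : ℕ) (G : Polynomial (Polynomial k)),
    aeval (blow P Q1 Q2) F = Polynomial.X ^ μ * G → ¬ Polynomial.X ∣ G → ∀ (ω δ : k) (m : ℕ),
    (G.map (Polynomial.evalRingHom 0)).eval ω = 0 →
    (Polynomial.derivative (G.map (Polynomial.evalRingHom 0))).eval ω ≠ 0 →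
    (Polynomial.X - Polynomial.C δ) ^ m ∣ G.map (Polynomial.evalRingHom 0) →
    Polynomial.X ^ m ∣ G.eval (Polynomial.C δ)

section blow
variable {k : Type*} [Field k] (P Q1 Q2 : Fin 3 → k) (F : MvPolynomial (Fin 3) k)

/-- Setting `S = s` gives the restriction of `F` to the line through `P` with direction `Q₁ + s Q₂`. -/
theorem map_blow (s : k) : (aeval (blow P Q1 Q2) F).map (Polynomial.evalRingHom s) =
    aeval (line P (fun i => Q1 i + s * Q2 i)) F := by
  have := map_aeval_of (k := k) (Polynomial.mapRingHom (Polynomial.evalRingHom s))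
    (fun c => by change (Polynomial.C (Polynomial.C c)).map _ = Polynomial.C c; simp) (blow P Q1 Q2) F
  refine this.trans ?_
  congr 2
  funext i
  simp only [blow, line]; simp; ring

/-- Setting `Y = y` gives the restriction of `F` to the line through `P + y Q₁` with direction
`y Q₂`. -/
theorem eval_blow (y : k) : (aeval (blow P Q1 Q2) F).eval (Polynomial.C y) =
    aeval (line (fun i => P i + y * Q1 i) (fun i => y * Q2 i)) F := by
  have := map_aeval_of (k := k) (Polynomial.evalRingHom (Polynomial.C y))
    (fun c => by change (Polynomial.C (Polynomial.C c)).eval _ = Polynomial.C c; simp) (blow P Q1 Q2) F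
  refine this.trans ?_
  congr 2
  funext i
  simp only [blow, line, Polynomial.coe_evalRingHom, Polynomial.eval_add, Polynomial.eval_mul,
    Polynomial.eval_C, Polynomial.eval_X, Polynomial.C_add, Polynomial.C_mul]
  ring

theorem ev2_X {L : Type*} [CommRing L] [Algebra k L] (t y : L) :
    ev2 (k := k) t y Polynomial.X = y := by
  simp [ev2]

theorem ev2_blow {L : Type*} [CommRing L] [Algebra k L] (t y : L) :
    ev2 t y (aeval (blow P Q1 Q2) F) =
    aeval (fun i => algebraMap k L (P i) + y * (algebraMap k L (Q1 i) + t * algebraMap k L (Q2 i)))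
      F := by
  have := map_aeval_of (k := k) (ev2 (k := k) t y)
    (fun c => by change ev2 t y (Polynomial.C (Polynomial.C c)) = _; rw [ev2_C]; simp)
    (blow P Q1 Q2) F
  refine this.trans ?_
  congr 2
  funext i
  simp [blow, ev2_C, ev2_X]; ring

end blow

theorem act_comp {k A : Type*} [Field k] [CommRing A] [Algebra k A] (M : Fin 3 → Fin 3 → k)
    (u : Fin 3 → A) (F : MvPolynomial (Fin 3) k) :
    aeval u (aeval (act M (X : Fin 3 → MvPolynomial (Fin 3) k)) F) = aeval (act M u) F := by
  have := map_aeval_of (k := k) (aeval u : MvPolynomial (Fin 3) k →ₐ[k] A).toRingHom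
    (fun c => by simp) (act M (X : Fin 3 → MvPolynomial (Fin 3) k)) F
  refine this.trans ?_
  congr 2
  funext i
  simp [act]

/-- The criterion is invariant under a linear change of coordinates `M` that multiplies `F` by a nonzero
scalar. -/
theorem crit_act {k : Type*} [Field k] {F : MvPolynomial (Fin 3) k} {P : Fin 3 → k}
    (M : Fin 3 → Fin 3 → k) (hM : det3 (M 0) (M 1) (M 2) ≠ 0) (κ : k) (hκ : κ ≠ 0)
    (hF : aeval (act M X) F = C κ * F) (h : Crit F (act M P)) : Crit F P := by
  intro Q1 Q2 hdet μ G hG hX ω δ m h1 h2 h3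
  have hb : blow (act M P) (act M Q1) (act M Q2) = act M (blow P Q1 Q2) := by
    funext i
    simp only [blow, act, Polynomial.C_add, Polynomial.C_mul, Algebra.algebraMap_self,
      RingHom.id_apply]
    change _ = Polynomial.C (Polynomial.C (M i 0)) * _ + Polynomial.C (Polynomial.C (M i 1)) * _ +
      Polynomial.C (Polynomial.C (M i 2)) * _
    ring
  have hu : IsUnit (Polynomial.C (Polynomial.C κ)) :=
    Polynomial.isUnit_C.2 (Polynomial.isUnit_C.2 hκ.isUnit)
  have := h (act M Q1) (act M Q2) (by rw [det3_act]; exact mul_ne_zero hM hdet) μ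
    (Polynomial.C (Polynomial.C κ) * G) (by
      rw [hb, ← act_comp, hF, map_mul, hG]
      have : (aeval (blow P Q1 Q2)) (C κ : MvPolynomial (Fin 3) k) =
        Polynomial.C (Polynomial.C κ) := by rw [aeval_C]; rfl
      rw [this]; ring) (by rwa [hu.dvd_mul_left]) ω δ m (by simp [h1])
      (by simpa [h1, hκ] using h2)
      (by rw [Polynomial.map_mul]; exact h3.mul_left _)
  rw [Polynomial.eval_mul, Polynomial.eval_C] at this
  exact ((Polynomial.isUnit_C.2 hκ.isUnit).dvd_mul_left).1 this

/-! ### Restriction to z = 0 and homogenisation -/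

section
variable {k : Type*} [Field k] {p q : ℕ} [Fact p.Prime] [CharP k p]
  {F : MvPolynomial (Fin 3) k}

/-- The values of `F` on the line `z = 0`. Both `D₁` and `D₂` vanish there, so the identity
`D₂ F = D₁` is first differentiated with respect to `z` at `z = 0`. -/
theorem IsDGZ.line_z (hq : IsPow p q) (hF : IsDGZ q F) (y : k) :
    (y ^ q - y) ^ q * aeval ![1, y, 0] F = (y ^ q ^ 2 - y) ^ q := by
  have h1 := hF.aeval_eq (line ![1, y, 0] ![0, 0, 1])
  have h2 := congrArg (fun f => (Polynomial.derivative f).eval 0) h1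
  have e1 : ∀ i, ∀ j, Polynomial.derivative (line ![1, y, 0] ![0, 0, 1] i ^ q ^ (j + 1)) = 0 :=
    fun i j => derivative_pow_q hq _ (by omega)
  have e1' : ∀ i, Polynomial.derivative (line ![1, y, 0] ![0, 0, 1] i ^ q) = 0 := fun i => by
    simpa using e1 i 0
  have e1'' := fun i => e1 i 1
  have e1''' := fun i => e1 i 2
  have e3 : ∀ i, Polynomial.derivative (line ![1, y, 0] ![0, 0, 1] i) =
    Polynomial.C ((![0, 0, 1] : Fin 3 → k) i) := fun i => by simp [line]
  have e4 := line_eval (k := k) ![1, y, 0] ![0, 0, 1] 0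
  have e6 : (fun i => (![1, y, 0] : Fin 3 → k) i + 0 * (![0, 0, 1] : Fin 3 → k) i) = ![1, y, 0] := by
    funext i; simp
  have hq0 : q ≠ 0 := by have := hq.one_lt; omega
  simp only [Polynomial.derivative_mul, Polynomial.eval_add, Polynomial.eval_mul] at h2
  rw [eval_line, e6] at h2
  simp only [d1, d2, det3, Pi.pow_apply, Polynomial.derivative_add, Polynomial.derivative_sub, e1', e1'',
    e1''', e3, Polynomial.derivative_mul, Polynomial.eval_add, Polynomial.eval_mul, e4,
    Polynomial.eval_sub, Polynomial.eval_pow, Polynomial.eval_C, Polynomial.eval_zero] at h2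
  simp [hq0] at h2
  have e := hq.sub_pow (y ^ q) y 1
  have e' := hq.sub_pow (y ^ q ^ 2) y 1
  rw [pow_one] at e e'
  rw [e, e', ← pow_mul, ← pow_mul, (by ring : q * q = q ^ 2), (by ring : q ^ 2 * q = q ^ 3)]
  simpa using h2

end

/-- `H` is homogeneous of degree `N`, in functional form. -/
def Hom {k : Type} [Field k] (N : ℕ) (H : MvPolynomial (Fin 3) k) : Prop :=
  ∀ (A : Type) [CommRing A] [Algebra k A] (c : A) (u : Fin 3 → A),
    aeval (fun i => c * u i) H = c ^ N * aeval u H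

section hom
variable {k : Type} [Field k]

theorem Hom.mul {N M : ℕ} {H E : MvPolynomial (Fin 3) k} (h : Hom N H) (e : Hom M E) :
    Hom (N + M) (H * E) := by
  intro A _ _ c u
  rw [map_mul, map_mul, h, e, pow_add]; ring

theorem Hom.add {N : ℕ} {H E : MvPolynomial (Fin 3) k} (h : Hom N H) (e : Hom N E) :
    Hom N (H + E) := by
  intro A _ _ c u
  rw [map_add, map_add, h, e]; ring

theorem Hom.C (c : k) : Hom 0 (MvPolynomial.C c : MvPolynomial (Fin 3) k) := by
  intro A _ _ c u; simp

theorem Hom.X (i : Fin 3) : Hom 1 (MvPolynomial.X i : MvPolynomial (Fin 3) k) := by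
  intro A _ _ c u; simp

theorem Hom.pow {N : ℕ} {H : MvPolynomial (Fin 3) k} (h : Hom N H) (j : ℕ) : Hom (N * j) (H ^ j) := by
  intro A _ _ c u
  rw [map_pow, map_pow, h, mul_pow, pow_mul]

theorem Hom.act {N : ℕ} {H : MvPolynomial (Fin 3) k} (h : Hom N H) (M : Fin 3 → Fin 3 → k) :
    Hom N (aeval (act M (MvPolynomial.X : Fin 3 → MvPolynomial (Fin 3) k)) H) := by
  intro A _ _ c u
  rw [act_comp, act_comp, ← h]
  congr 2
  funext i
  simp only [_root_.act]
  ring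

/-- A polynomial relation `H(s, y)` can be homogenised in the coordinates
`u₀`, `u₁ = y u₀`, `u₂ = s u₁`. -/
theorem exists_homogenization (H : Polynomial (Polynomial k)) :
    ∃ (N : ℕ) (E : MvPolynomial (Fin 3) k), Hom (2 * N) E ∧
      ∀ (A : Type) [CommRing A] [Algebra k A] (u : Fin 3 → A) (s y : A), u 1 = y * u 0 →
        u 2 = s * u 1 → aeval u E = (u 0 * u 1) ^ N * ev2 s y H := by
  have hadd : ∀ H H' : Polynomial (Polynomial k),
    (∃ (N : ℕ) (E : MvPolynomial (Fin 3) k), Hom (2 * N) E ∧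
      ∀ (A : Type) [CommRing A] [Algebra k A] (u : Fin 3 → A) (s y : A), u 1 = y * u 0 →
        u 2 = s * u 1 → aeval u E = (u 0 * u 1) ^ N * ev2 s y H) →
    (∃ (N : ℕ) (E : MvPolynomial (Fin 3) k), Hom (2 * N) E ∧
      ∀ (A : Type) [CommRing A] [Algebra k A] (u : Fin 3 → A) (s y : A), u 1 = y * u 0 →
        u 2 = s * u 1 → aeval u E = (u 0 * u 1) ^ N * ev2 s y H') →
    (∃ (N : ℕ) (E : MvPolynomial (Fin 3) k), Hom (2 * N) E ∧
      ∀ (A : Type) [CommRing A] [Algebra k A] (u : Fin 3 → A) (s y : A), u 1 = y * u 0 →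
        u 2 = s * u 1 → aeval u E = (u 0 * u 1) ^ N * ev2 s y (H + H')) := by
    rintro H H' ⟨N, E, hE, h⟩ ⟨N', E', hE', h'⟩
    refine ⟨N + N', (X 0 * X 1) ^ N' * E + (X 0 * X 1) ^ N * E', ?_, ?_⟩
    · have a1 := (((Hom.X (k := k) 0).mul (Hom.X 1)).pow N').mul hE
      have a2 := (((Hom.X (k := k) 0).mul (Hom.X 1)).pow N).mul hE'
      refine Hom.add ?_ ?_
      · convert a1 using 1; ring
      · convert a2 using 1; ring
    · intro A _ _ u s y h1 h2
      rw [map_add, map_mul, map_mul, h A u s y h1 h2, h' A u s y h1 h2]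
      simp only [map_pow, map_mul, aeval_X, map_add]
      ring
  induction H using Polynomial.induction_on' with
  | add H H' h h' => exact hadd H H' h h'
  | monomial n c =>
    induction c using Polynomial.induction_on' with
    | add c c' h h' => rw [map_add]; exact hadd _ _ h h'
    | monomial m c =>
      refine ⟨n + m, MvPolynomial.C c * ((X 1 * X 1) ^ n * (X 2 * X 0) ^ m), ?_, ?_⟩
      · have := (Hom.C c).mul ((((Hom.X (k := k) 1).mul (Hom.X 1)).pow n).mul
          (((Hom.X (k := k) 2).mul (Hom.X 0)).pow m))
        convert this using 1; ring
      · intro A _ _ u s y h1 h2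
        have : ev2 (k := k) s y (Polynomial.monomial n (Polynomial.monomial m c)) =
            algebraMap k A c * s ^ m * y ^ n := by
          rw [← Polynomial.C_mul_X_pow_eq_monomial, map_mul, map_pow, ev2_C, ev2_X,
            Polynomial.aeval_monomial]
        rw [this, map_mul, map_mul, map_pow, map_pow, map_mul, map_mul]
        simp only [aeval_X, aeval_C]
        rw [h2, h1]
        ring

end hom

/-! ### Divisibility by F -/

theorem dvd_of_dvd_prime_pow_mul {R : Type*} [CommRing R] [IsDomain R] {z F H : R} (hz : Prime z)
    (hzF : ¬ z ∣ F) {a : ℕ} (h : F ∣ z ^ a * H) : F ∣ H := by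
  obtain ⟨E, hE⟩ := h
  obtain ⟨E', rfl⟩ := hz.pow_dvd_of_dvd_mul_left a hzF (Dvd.intro _ hE)
  refine ⟨E', mul_left_cancel₀ (pow_ne_zero a hz.ne_zero) (hE.trans ?_)⟩
  ring

section
variable {k : Type} [Field k] [Infinite k] {p q : ℕ} [Fact p.Prime] [CharP k p]
  {F : MvPolynomial (Fin 3) k}

/-- By `IsDGZ.line_z`, `F` does not vanish identically on the line `z = 0`. -/
theorem IsDGZ.not_X_dvd (hq : IsPow p q) (hF : IsDGZ q F) : ¬ X 2 ∣ F := by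
  rintro ⟨E, rfl⟩
  have h1 := hq.one_lt
  obtain ⟨y, hy⟩ := exists_pow_ne (k := k) (m := q ^ 2) (by nlinarith)
  have := hF.line_z hq y
  rw [map_mul, aeval_X] at this
  simp only [Matrix.cons_val, zero_mul, mul_zero] at this
  exact hy (sub_eq_zero.1 (eq_zero_of_pow_eq_zero this.symm))

omit [CharP k p] in
theorem IsDGZ.hom (hq : IsPow p q) (hF : IsDGZ q F) : Hom (q ^ 3 - q ^ 2) F :=
  fun _ _ _ c u => hF.smul hq c u

/-- For forms, divisibility by `F` can be tested on the chart `z = 1`, because `z ∤ F`. -/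
theorem homog_dvd (hq : IsPow p q) (hF : IsDGZ q F) {N : ℕ} {H : MvPolynomial (Fin 3) k}
    (hH : Hom N H)
    (h : aeval ![X 0, X 1, 1] F ∣ (aeval ![X 0, X 1, 1] H : MvPolynomial (Fin 2) k)) : F ∣ H := by
  obtain ⟨e, he⟩ := h
  let R := MvPolynomial (Fin 3) k
  let K := FractionRing R
  let x : Fin 3 → K := fun i => algebraMap R K (X i)
  have hinj : Function.Injective (algebraMap R K) := IsFractionRing.injective R K
  have hz : x 2 ≠ 0 := (map_ne_zero_iff _ hinj).2 (X_ne_zero 2)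
  let ψ : MvPolynomial (Fin 2) k →ₐ[k] K := aeval ![x 0 / x 2, x 1 / x 2]
  have hx : ∀ G : R, aeval x G = algebraMap R K G := fun G => by
    have := map_aeval_of (k := k) (algebraMap R K) (fun c => rfl) X G
    rw [← this, aeval_X_left_apply]
  -- In `k(x, y, z)`, a form `G` of degree `N` is `z ^ N` times its dehomogenisation at `(x/z, y/z)`.
  have C1 : ∀ (N : ℕ) (G : R), Hom N G →
      x 2 ^ N * ψ (aeval ![X 0, X 1, 1] G) = algebraMap R K G := by
    intro N G hG
    have := map_aeval_of (k := k) ψ.toRingHom (fun c => by simp) ![X 0, X 1, 1] G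
    change ψ _ = _ at this
    rw [this, ← hG, ← hx]
    congr 2
    funext i
    fin_cases i <;> simp [ψ, mul_div_cancel₀, hz]
  have C2 : ∀ e : MvPolynomial (Fin 2) k, ∃ (M : ℕ) (E : R), x 2 ^ M * ψ e = algebraMap R K E := by
    intro e
    induction e using MvPolynomial.induction_on with
    | C c => exact ⟨0, C c, by simp [ψ]; rfl⟩
    | add e e' h h' =>
      obtain ⟨M, E, h⟩ := h
      obtain ⟨M', E', h'⟩ := h'
      refine ⟨M + M', X 2 ^ M' * E + X 2 ^ M * E', ?_⟩
      simp only [map_add, map_mul, map_pow, ← h, ← h']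
      change _ = x 2 ^ M' * _ + x 2 ^ M * _
      ring
    | mul_X e i h =>
      obtain ⟨M, E, h⟩ := h
      refine ⟨M + 1, E * X (Fin.castSucc i), ?_⟩
      rw [map_mul, map_mul, ← h]
      have : x 2 * ψ (X i) = algebraMap R K (X (Fin.castSucc i)) := by
        fin_cases i <;> simp [ψ, mul_div_cancel₀, hz] <;> rfl
      rw [← this]; ring
  obtain ⟨M, E, hE⟩ := C2 e
  have hf := C1 _ _ (hF.hom hq)
  have hh := C1 _ _ hH
  set D := q ^ 3 - q ^ 2
  have key : X 2 ^ (D + M) * H = F * (X 2 ^ N * E) := by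
    apply hinj
    rw [map_mul, map_mul, map_mul, map_pow, map_pow, ← hh, ← hf, ← hE, he, map_mul]
    change x 2 ^ _ * _ = _ * (x 2 ^ _ * _)
    ring
  exact dvd_of_dvd_prime_pow_mul (X_prime (i := 2)) (hF.not_X_dvd hq) (Dvd.intro _ key.symm)

omit [CharP k p] in
/-- `F` divides no nonzero linear form, as its degree `q³ - q²` is at least `2`. -/
theorem not_dvd_linear (hq : IsPow p q) (hF : IsDGZ q F) (a : Fin 3 → k) (ha : a ≠ 0) :
    ¬ F ∣ C (a 0) * X 0 + C (a 1) * X 1 + C (a 2) * X 2 := by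
  rintro ⟨E, hE⟩
  obtain ⟨i, hi⟩ := Function.ne_iff.1 ha
  let u : Fin 3 → Polynomial k := fun j => Polynomial.X * Polynomial.C (if j = i then 1 else 0)
  have h1 := congrArg (aeval u) hE
  rw [map_mul, hF.smul hq] at h1
  have h2 : aeval u (C (a 0) * X 0 + C (a 1) * X 1 + C (a 2) * X 2) =
      Polynomial.X * Polynomial.C (a i) := by
    simp only [map_add, map_mul, aeval_X, aeval_C, u]
    change Polynomial.C _ * _ + Polynomial.C _ * _ + Polynomial.C _ * _ = _
    fin_cases i <;> simp
  have hD : q ^ 3 - q ^ 2 = 2 + (q ^ 3 - q ^ 2 - 2) := by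
    have h2q := hq.one_lt
    have h4 : 4 ≤ q ^ 2 := by nlinarith
    have h5 : q ^ 3 = q * q ^ 2 := by ring
    have h6 : 2 * q ^ 2 ≤ q ^ 3 := by rw [h5]; exact Nat.mul_le_mul_right _ h2q
    clear h5
    generalize q ^ 3 = x at *
    generalize q ^ 2 = y at *
    omega
  rw [h2] at h1
  generalize q ^ 3 - q ^ 2 - 2 = D at hD
  rw [hD] at h1
  generalize aeval (fun j => (Polynomial.C (if j = i then 1 else 0) : Polynomial k)) F = f at h1
  generalize aeval u E = e at h1
  have h3 : Polynomial.C (a i) = Polynomial.X * (Polynomial.X ^ D * f * e) := by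
    apply mul_left_cancel₀ (Polynomial.X_ne_zero (R := k))
    rw [h1]; ring
  have h4 := congrArg (Polynomial.eval 0) h3
  rw [Polynomial.eval_mul, Polynomial.eval_C, Polynomial.eval_X, zero_mul] at h4
  exact hi h4

end

/-! ### Galois points satisfy the criterion -/

/-- The cross product. -/
def cross {k : Type*} [CommRing k] (u v : Fin 3 → k) : Fin 3 → k :=
  ![u 1 * v 2 - u 2 * v 1, u 2 * v 0 - u 0 * v 2, u 0 * v 1 - u 1 * v 0]

/-- Evaluating `H(S, Y)` at the variables `S` and `Y` returns `H`. -/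
theorem ev2_self {k : Type*} [Field k] (H : Polynomial (Polynomial k)) :
    ev2 (k := k) (Polynomial.C Polynomial.X : Polynomial (Polynomial k)) Polynomial.X H = H := by
  have : ev2 (k := k) (Polynomial.C Polynomial.X : Polynomial (Polynomial k)) Polynomial.X =
      RingHom.id _ := by
    apply Polynomial.ringHom_ext
    · intro a
      rw [ev2_C]
      have : (Polynomial.aeval (R := k) (Polynomial.C Polynomial.X : Polynomial (Polynomial k))) =
          (AlgHom.mk (Polynomial.C : Polynomial k →+* Polynomial (Polynomial k)) (fun _ => rfl) :
            Polynomial k →ₐ[k] Polynomial (Polynomial k)) := by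
        apply Polynomial.algHom_ext
        simp
      rw [this]; rfl
    · rw [ev2_X]; rfl
  rw [this]; rfl

section
variable {k : Type} [Field k] [Infinite k] {p q : ℕ} [Fact p.Prime] [CharP k p]
  {F : MvPolynomial (Fin 3) k}

/-- A Galois point satisfies the multiplicity criterion. For a frame `P, Q₁, Q₂`, let `U₀, U₁, U₂` be
the dual coordinates, restricted to `C`, and put `t = U₂ / U₁`, `y = U₁ / U₀`. Then `k(t)` is the subfield
of the projection from `P`, the pair `(t, y)` generates `k(C)`, and its relations are the multiples of
`G`, so that `core_mult` applies. -/
theorem galois_crit (hq : IsPow p q) (hF : IsDGZ q F) (L : Type) [Field L] [Algebra k L]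
    (φ : MvPolynomial (Fin 2) k →ₐ[k] L)
    (hker : RingHom.ker φ.toRingHom =
      Ideal.span {(aeval ![X 0, X 1, 1] F : MvPolynomial (Fin 2) k)})
    (hfrac : ∀ y : L, ∃ a b : MvPolynomial (Fin 2) k, φ b ≠ 0 ∧ y = φ a / φ b)
    (P : Fin 3 → k)
    (hgal : ∀ a b : Fin 3 → k,
      (∑ i : Fin 3, a i * P i = 0) → (∑ i : Fin 3, b i * P i = 0) →
      LinearIndependent k ![a, b] →
      IsGalois ↥(IntermediateField.adjoin k
        {φ (C (a 0) * X 0 + C (a 1) * X 1 + C (a 2)) /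
          φ (C (b 0) * X 0 + C (b 1) * X 1 + C (b 2))}) L) :
    Crit F P := by
  intro Q1 Q2 hΔ μ G hG hXG ω δ m h1 h2 h3
  set Δ := det3 P Q1 Q2 with hΔd
  let ξ : Fin 3 → L := ![φ (X 0), φ (X 1), 1]
  have hξ : ∀ H : MvPolynomial (Fin 3) k, aeval ξ H = φ (aeval ![X 0, X 1, 1] H) := by
    intro H
    have := map_aeval_of (k := k) φ.toRingHom (fun c => by simp) ![X 0, X 1, 1] H
    change φ _ = _ at this
    rw [this]
    congr 2
    funext i
    fin_cases i <;> simp [ξ]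
  have hmem : ∀ H, φ H = 0 ↔ aeval ![X 0, X 1, 1] F ∣ H := by
    intro H
    rw [← Ideal.mem_span_singleton, ← hker, RingHom.mem_ker]; rfl
  have hzero : ∀ (N : ℕ) (H : MvPolynomial (Fin 3) k), Hom N H → aeval ξ H = 0 → F ∣ H := by
    intro N H hH h
    rw [hξ, hmem] at h
    exact homog_dvd hq hF hH h
  have hFξ : aeval ξ F = 0 := by rw [hξ, hmem]
  -- The rows of `M` are `Δ` times the basis dual to `P, Q₁, Q₂`.
  let M : Fin 3 → Fin 3 → k := ![cross Q1 Q2, cross Q2 P, cross P Q1]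
  have hM : ∀ i, M i ≠ 0 := by
    intro i hi
    apply hΔ
    have e0 := congrFun hi 0
    have e1 := congrFun hi 1
    have e2 := congrFun hi 2
    fin_cases i <;> simp [M, cross] at e0 e1 e2 <;> simp only [hΔd, det3]
    · linear_combination P 0 * e0 + P 1 * e1 + P 2 * e2
    · linear_combination Q1 0 * e0 + Q1 1 * e1 + Q1 2 * e2
    · linear_combination Q2 0 * e0 + Q2 1 * e1 + Q2 2 * e2
  have hU : ∀ i, act M ξ i ≠ 0 := by
    intro i hi
    apply not_dvd_linear hq hF (M i) (hM i)
    have hom : ∀ (c : k) j, Hom 1 (C c * X j : MvPolynomial (Fin 3) k) := fun c j => by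
      simpa using (Hom.C c).mul (Hom.X j)
    apply hzero 1 _ (((hom _ _).add (hom _ _)).add (hom _ _))
    rw [← hi]
    simp [act]
  have hU0 := hU 0
  have hU1 := hU 1
  have hU2 := hU 2
  set U := act M ξ with hUd
  obtain ⟨t, htd⟩ : ∃ t, t = U 2 / U 1 := ⟨_, rfl⟩
  obtain ⟨y, hyd⟩ : ∃ y, y = U 1 / U 0 := ⟨_, rfl⟩
  have ht : t ≠ 0 := by rw [htd]; exact div_ne_zero hU2 hU1
  have hy : y ≠ 0 := by rw [hyd]; exact div_ne_zero hU1 hU0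
  have hyU : U 1 = y * U 0 := by rw [hyd]; field_simp
  have htU : U 2 = t * U 1 := by rw [htd]; field_simp
  have hΔ' : algebraMap k L Δ ≠ 0 := by simpa using hΔ
  let w : Fin 3 → L := fun i =>
    algebraMap k L (P i) + y * (algebraMap k L (Q1 i) + t * algebraMap k L (Q2 i))
  -- The point `P + y (Q₁ + t Q₂)` is the generic point `ξ` of `C`, up to a scalar.
  have hw : ∀ i, U 0 * w i = algebraMap k L Δ * ξ i := by
    intro i
    have : U 0 * w i = U 0 * algebraMap k L (P i) + U 1 * algebraMap k L (Q1 i) +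
        U 2 * algebraMap k L (Q2 i) := by
      rw [htU, hyU]; simp only [w]; ring
    rw [this]
    simp only [hUd, act, M, hΔd, det3, cross, map_sub, map_mul, map_add, Matrix.cons_val]
    fin_cases i <;> simp only [Fin.zero_eta, Fin.mk_one, Fin.reduceFinMk] <;> ring
  have hev : ∀ H : MvPolynomial (Fin 3) k, ev2 t y (aeval (blow P Q1 Q2) H) = aeval w H :=
    fun H => ev2_blow P Q1 Q2 H t y
  have hw2 : w 2 ≠ 0 := by
    intro h
    have := hw 2
    rw [h, mul_zero] at this
    exact hΔ' (by simpa [ξ] using this.symm)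
  have hxw : ∀ i, ξ i * w 2 = w i := by
    intro i
    apply mul_left_cancel₀ (mul_ne_zero hU0 hΔ')
    have a1 := hw 2
    have a2 := hw i
    have a3 : ξ 2 = 1 := rfl
    rw [a3] at a1
    linear_combination algebraMap k L Δ * ξ i * a1 - algebraMap k L Δ * a2
  have hwb : ∀ i, w i = ev2 t y (blow P Q1 Q2 i) := by
    intro i
    have := hev (X i)
    rw [aeval_X, aeval_X] at this
    exact this.symm
  have hgen0 : ∀ a : MvPolynomial (Fin 2) k, ∃ (N : ℕ) (b : Polynomial (Polynomial k)),
      φ a * w 2 ^ N = ev2 t y b := by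
    intro a
    induction a using MvPolynomial.induction_on with
    | C c =>
      refine ⟨0, Polynomial.C (Polynomial.C c), ?_⟩
      rw [ev2_C, Polynomial.aeval_C, pow_zero, mul_one]
      exact φ.commutes c
    | add e e' h h' =>
      obtain ⟨N, b, h⟩ := h
      obtain ⟨N', b', h'⟩ := h'
      refine ⟨N + N', b * blow P Q1 Q2 2 ^ N' + b' * blow P Q1 Q2 2 ^ N, ?_⟩
      rw [map_add, map_add, map_mul, map_mul, map_pow, map_pow, ← h, ← h', ← hwb]
      ring
    | mul_X e i h =>
      obtain ⟨N, b, h⟩ := h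
      refine ⟨N + 1, b * blow P Q1 Q2 (Fin.castSucc i), ?_⟩
      have : φ (X i) * w 2 = w (Fin.castSucc i) := by
        refine Eq.trans ?_ (hxw _)
        congr 1
        fin_cases i <;> simp [ξ]
      rw [map_mul, map_mul, ← h, ← hwb, ← this]
      ring
  have hgen : ∀ x : L, ∃ a b : Polynomial (Polynomial k), ev2 t y b ≠ 0 ∧
      x = ev2 t y a / ev2 t y b := by
    intro x
    obtain ⟨a, b, hb, rfl⟩ := hfrac x
    obtain ⟨N, a', ha'⟩ := hgen0 a
    obtain ⟨N', b', hb'⟩ := hgen0 b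
    refine ⟨a' * blow P Q1 Q2 2 ^ N', b' * blow P Q1 Q2 2 ^ N, ?_, ?_⟩
    · rw [map_mul, map_pow, ← hb', ← hwb]
      exact mul_ne_zero (mul_ne_zero hb (pow_ne_zero _ hw2)) (pow_ne_zero _ hw2)
    · rw [map_mul, map_pow, map_mul, map_pow, ← hb', ← ha', ← hwb]
      field_simp
  have hGker : ∀ H : Polynomial (Polynomial k), ev2 t y H = 0 ↔ G ∣ H := by
    intro H
    constructor
    · intro h
      -- Homogenise the relation `H(t, y) = 0` in the `U i` to get a multiple of `F`, and pull back along
      -- `P + Y (Q₁ + S Q₂)`.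
      obtain ⟨N, E, hE, hEv⟩ := exists_homogenization H
      obtain ⟨K, hK⟩ := hzero _ _ (hE.act M) (by
        rw [act_comp, hEv L _ t y hyU htU, h, mul_zero])
      have e := congrArg (aeval (R := k) (blow P Q1 Q2)) hK
      have b0 : act M (blow P Q1 Q2) 0 = Polynomial.C (Polynomial.C Δ) := by
        simp only [act, blow, M, hΔd, det3, cross, Matrix.cons_val]
        change Polynomial.C (Polynomial.C _) * _ + Polynomial.C (Polynomial.C _) * _ +
          Polynomial.C (Polynomial.C _) * _ = _
        simp only [map_sub, map_mul, map_add]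
        ring
      have b1 : act M (blow P Q1 Q2) 1 = Polynomial.X * Polynomial.C (Polynomial.C Δ) := by
        simp only [act, blow, M, hΔd, det3, cross, Matrix.cons_val]
        change Polynomial.C (Polynomial.C _) * _ + Polynomial.C (Polynomial.C _) * _ +
          Polynomial.C (Polynomial.C _) * _ = _
        simp only [map_sub, map_mul, map_add]
        ring
      have b2 : act M (blow P Q1 Q2) 2 =
          Polynomial.C Polynomial.X * (Polynomial.X * Polynomial.C (Polynomial.C Δ)) := by
        simp only [act, blow, M, hΔd, det3, cross, Matrix.cons_val]
        change Polynomial.C (Polynomial.C _) * _ + Polynomial.C (Polynomial.C _) * _ +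
          Polynomial.C (Polynomial.C _) * _ = _
        simp only [map_sub, map_mul, map_add]
        ring
      rw [act_comp, hEv _ (act M (blow P Q1 Q2)) (Polynomial.C Polynomial.X) Polynomial.X (by rw [b0, b1])
        (by rw [b1, b2]), ev2_self, map_mul, hG, b0, b1] at e
      have hu : IsUnit (Polynomial.C (Polynomial.C (Δ ^ (2 * N)))) :=
        Polynomial.isUnit_C.2 (Polynomial.isUnit_C.2 (pow_ne_zero _ hΔ).isUnit)
      have hd : G ∣ Polynomial.X ^ N * (Polynomial.C (Polynomial.C (Δ ^ (2 * N))) * H) := by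
        refine ⟨Polynomial.X ^ μ * aeval (blow P Q1 Q2) K, ?_⟩
        simp only [map_pow]
        linear_combination e
      exact (hu.dvd_mul_left).1 (dvd_of_dvd_prime_pow_mul Polynomial.prime_X hXG hd)
    · rintro ⟨K, rfl⟩
      have e := hF.smul hq (U 0) w
      have e2 : (fun i => U 0 * w i) = fun i => algebraMap k L Δ * ξ i := funext hw
      rw [e2, hF.smul hq, hFξ, mul_zero, ← hev, hG, map_mul, map_pow, ev2_X] at e
      have : ev2 t y G = 0 := by
        rcases mul_eq_zero.1 e.symm with h | h
        · exact absurd h (pow_ne_zero _ hU0)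
        · exact (mul_eq_zero.1 h).resolve_left (pow_ne_zero _ hy)
      rw [map_mul, this, zero_mul]
  have hφU : ∀ a : Fin 3 → k, φ (C (a 0) * X 0 + C (a 1) * X 1 + C (a 2)) =
      algebraMap k L (a 0) * ξ 0 + algebraMap k L (a 1) * ξ 1 + algebraMap k L (a 2) * ξ 2 := by
    intro a
    have hC : ∀ c : k, φ (C c) = algebraMap k L c := φ.commutes
    simp [hC, ξ]
  -- `U 2` and `U 1` are independent linear forms vanishing at `P`.
  have hg := hgal (cross P Q1) (cross Q2 P) (by simp [Fin.sum_univ_three, cross]; ring)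
    (by simp [Fin.sum_univ_three, cross]; ring) (by
      rw [LinearIndependent.pair_iff]
      intro c d hcd
      have e0 := congrFun hcd 0
      have e1 := congrFun hcd 1
      have e2 := congrFun hcd 2
      simp [cross] at e0 e1 e2
      constructor
      · apply (mul_eq_zero.1 (_ : c * Δ = 0)).resolve_right hΔ
        simp only [hΔd, det3]
        linear_combination Q2 0 * e0 + Q2 1 * e1 + Q2 2 * e2
      · apply (mul_eq_zero.1 (_ : d * Δ = 0)).resolve_right hΔ
        simp only [hΔd, det3]
        linear_combination Q1 0 * e0 + Q1 1 * e1 + Q1 2 * e2)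
  rw [hφU, hφU] at hg
  change IsGalois ↥(IntermediateField.adjoin k {U 2 / U 1}) L at hg
  rw [← htd] at hg
  exact core_mult t y ht G hGker hgen ω δ m h1 h2 h3

end

/-! ### Tangent lines and collinear smooth points -/

/-- Cramer's rule. -/
theorem det3_cramer {A : Type*} [CommRing A] (P Q1 Q2 x a b : Fin 3 → A) :
    det3 P Q1 Q2 * det3 x a b = det3 x Q1 Q2 * det3 P a b + det3 P x Q2 * det3 Q1 a b +
      det3 P Q1 x * det3 Q2 a b := by
  simp only [det3]; ring

theorem det3_cramer' {A : Type*} [CommRing A] (P Q1 Q2 x : Fin 3 → A) (i : Fin 3) :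
    det3 P Q1 Q2 * x i = det3 x Q1 Q2 * P i + det3 P x Q2 * Q1 i + det3 P Q1 x * Q2 i := by
  fin_cases i <;> simp only [det3, Fin.zero_eta, Fin.mk_one, Fin.reduceFinMk] <;> ring

theorem exists_split {k : Type*} [Field k] {f : Polynomial (Polynomial k)} (hf : f ≠ 0) :
    ∃ (μ : ℕ) (G : Polynomial (Polynomial k)), f = Polynomial.X ^ μ * G ∧ ¬ Polynomial.X ∣ G := by
  obtain ⟨G, h1, h2⟩ := Polynomial.exists_eq_pow_rootMultiplicity_mul_and_not_dvd f hf 0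
  rw [Polynomial.C_0, sub_zero] at h1 h2
  exact ⟨_, G, h1, h2⟩

section
variable {k : Type*} [Field k] {p q : ℕ} [Fact p.Prime] [CharP k p]
  {F : MvPolynomial (Fin 3) k}

/-- A common zero of `f` and its derivative is a multiple root. -/
theorem sq_dvd_of_deriv {f : Polynomial k} {x : k} (h0 : f.eval x = 0)
    (h1 : (Polynomial.derivative f).eval x = 0) : (Polynomial.X - Polynomial.C x) ^ 2 ∣ f := by
  obtain ⟨g, rfl⟩ := Polynomial.dvd_iff_isRoot.2 h0
  rw [sq]
  refine mul_dvd_mul_left _ (Polynomial.dvd_iff_isRoot.2 ?_)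
  simpa [Polynomial.derivative_mul] using h1

theorem deriv_of_sq_dvd {f : Polynomial k} (h0 : Polynomial.X ^ 2 ∣ f) :
    (Polynomial.derivative f).eval 0 = 0 := by
  obtain ⟨g, rfl⟩ := h0
  simp [Polynomial.derivative_mul]

theorem IsDGZ.eval_eq_zero (hF : IsDGZ q F) {v : Fin 3 → k} (h2 : d2 q v ≠ 0) :
    aeval v F = 0 ↔ d1 q v = 0 := by
  have := hF.aeval_eq v
  rw [← this, mul_eq_zero]
  exact ⟨Or.inr, fun h => h.resolve_left h2⟩

theorem d2_pow (hq : IsPow p q) (v : Fin 3 → k) (j : ℕ) :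
    d2 q (v ^ q ^ j) = d2 q v ^ q ^ j := by
  rw [d2, d2, ← det3_pow hq]
  congr 1 <;> rw [← pow_mul, ← pow_mul, mul_comm]

theorem d1_pow (hq : IsPow p q) (v : Fin 3 → k) (j : ℕ) :
    d1 q (v ^ q ^ j) = d1 q v ^ q ^ j := by
  rw [d1, d1, ← det3_pow hq]
  congr 1 <;> rw [← pow_mul, ← pow_mul, mul_comm]

/-- Let `V = P + δ Q₁` and `W = P + ω Q₁` lie on `C` with `D₂ ≠ 0`. If `P` lies on the tangent line at `V`
but not on the one at `W`, the criterion fails at `P`: the line `S = 0` joining them meets `C` simply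
at `W` and with multiplicity at least two at the smooth point `V`. -/
theorem smooth_aux (hq : IsPow p q) (hF : IsDGZ q F) {P Q1 Q2 V W : Fin 3 → k} {δ ω : k}
    (hδ : δ ≠ 0) (hω : ω ≠ 0) (hPQ : det3 P Q1 Q2 ≠ 0)
    (hV : V = fun i => P i + δ * Q1 i) (hW : W = fun i => P i + ω * Q1 i)
    (hFV : d1 q V = 0) (hdV : d2 q V ≠ 0) (hFW : d1 q W = 0) (hdW : d2 q W ≠ 0)
    (htV : det3 P (V ^ q) (V ^ q ^ 3) = 0) (htW : det3 P (W ^ q) (W ^ q ^ 3) ≠ 0)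
    (hc : Crit F P) : False := by
  have hm := map_blow P Q1 Q2 F 0
  have e1 : (fun i => Q1 i + 0 * Q2 i) = Q1 := by funext i; simp
  rw [e1] at hm
  have hFV' := (hF.eval_eq_zero hdV).2 hFV
  have hFW' := (hF.eval_eq_zero hdW).2 hFW
  have dV := hF.deriv_eq hq P Q1 δ (by rw [← hV]; exact hFV')
  have dW := hF.deriv_eq hq P Q1 ω (by rw [← hW]; exact hFW')
  rw [← hV] at dV
  rw [← hW] at dW
  have hVv : ∀ i, V i = P i + δ * Q1 i := fun i => by rw [hV]
  have hWv : ∀ i, W i = P i + ω * Q1 i := fun i => by rw [hW]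
  have lV : det3 Q1 (V ^ q) (V ^ q ^ 3) = 0 := by
    have : d1 q V = det3 P (V ^ q) (V ^ q ^ 3) + δ * det3 Q1 (V ^ q) (V ^ q ^ 3) := by
      generalize hA : V ^ q = A
      generalize hB : V ^ q ^ 3 = B
      simp only [d1, hA, hB, det3, hVv]; ring
    rw [hFV, htV, zero_add] at this
    exact (mul_eq_zero.1 this.symm).resolve_left hδ
  have lW : det3 Q1 (W ^ q) (W ^ q ^ 3) ≠ 0 := by
    intro h0
    apply htW
    have : d1 q W = det3 P (W ^ q) (W ^ q ^ 3) + ω * det3 Q1 (W ^ q) (W ^ q ^ 3) := by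
      generalize hA : W ^ q = A
      generalize hB : W ^ q ^ 3 = B
      simp only [d1, hA, hB, det3, hWv]; ring
    rw [hFW, h0, mul_zero, add_zero] at this
    exact this.symm
  rw [lV] at dV
  have dV' := (mul_eq_zero.1 dV).resolve_left hdV
  have dW' : (Polynomial.derivative (aeval (line P Q1) F)).eval ω ≠ 0 := by
    intro h; rw [h, mul_zero] at dW; exact lW dW.symm
  have z1 : (aeval (line P Q1) F).eval δ = 0 := by rw [eval_line, ← hV, hFV']
  have z2 : (aeval (line P Q1) F).eval ω = 0 := by rw [eval_line, ← hW, hFW']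
  have hsq := sq_dvd_of_deriv z1 dV'
  have hne : aeval (blow P Q1 Q2) F ≠ 0 := by
    intro h
    rw [← hm, h] at dW'
    simp at dW'
  obtain ⟨μ, G, hG, hX⟩ := exists_split hne
  rw [hG, Polynomial.map_mul, Polynomial.map_pow, Polynomial.map_X] at hm
  rw [← hm] at z2 hsq dW'
  rw [Polynomial.eval_mul, Polynomial.eval_pow, Polynomial.eval_X, mul_eq_zero] at z2
  have z2 := z2.resolve_left (pow_ne_zero _ hω)
  have w2 : (Polynomial.derivative (G.map (Polynomial.evalRingHom 0))).eval ω ≠ 0 := by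
    intro h
    apply dW'
    rw [Polynomial.derivative_mul, Polynomial.eval_add, Polynomial.eval_mul, Polynomial.eval_mul,
      z2, h, mul_zero, mul_zero, add_zero]
  have hsq' : (Polynomial.X - Polynomial.C δ) ^ 2 ∣ G.map (Polynomial.evalRingHom 0) := by
    refine (Polynomial.prime_X_sub_C δ).pow_dvd_of_dvd_mul_left 2 ?_ hsq
    intro h
    have := Polynomial.dvd_iff_isRoot.1 h
    simp at this
    exact hδ this.1
  -- By the criterion `S² ∣ G(S, δ)`, so the direction `Q₂` is tangent at `V` as well.
  have hdvd := hc Q1 Q2 hPQ μ G hG hX ω δ 2 z2 w2 hsq'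
  have e := eval_blow P Q1 Q2 F δ
  rw [← hV, hG, Polynomial.eval_mul] at e
  have hd0 := deriv_of_sq_dvd (hdvd.mul_left ((Polynomial.X ^ μ).eval (Polynomial.C δ)))
  rw [e] at hd0
  have e0 : (fun i => V i + 0 * (δ * Q2 i)) = V := by funext i; simp
  have dd := hF.deriv_eq hq V (fun i => δ * Q2 i) 0 (by rw [e0]; exact hFV')
  rw [e0, hd0, mul_zero] at dd
  have t2 : det3 Q2 (V ^ q) (V ^ q ^ 3) = 0 := by
    have : det3 (fun i => δ * Q2 i) (V ^ q) (V ^ q ^ 3) = δ * det3 Q2 (V ^ q) (V ^ q ^ 3) := by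
      simp only [det3]; ring
    rw [this] at dd
    exact (mul_eq_zero.1 dd.symm).resolve_left hδ
  -- The form `det(·, ΦV, Φ³V)` would now vanish on the whole frame, but its value at `Φ²V` is
  -- `-D₂(ΦV) ≠ 0`.
  have t3 := det3_cramer P Q1 Q2 (V ^ q ^ 2) (V ^ q) (V ^ q ^ 3)
  rw [htV, lV, t2] at t3
  simp only [mul_zero, add_zero] at t3
  have t4 : det3 (V ^ q ^ 2) (V ^ q) (V ^ q ^ 3) = - d2 q (V ^ q ^ 1) := by
    rw [d2, ← pow_mul, ← pow_mul, pow_one]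
    have i1 : q * q = q ^ 2 := by ring
    have i2 : q * q ^ 2 = q ^ 3 := by ring
    rw [i1, i2]
    simp only [det3]; ring
  rw [t4, d2_pow hq] at t3
  exact (pow_ne_zero _ hdV) (neg_eq_zero.1 ((mul_eq_zero.1 t3).resolve_left hPQ))

/-- The same as `smooth_aux` for a point `P = x v + y w` on the line joining `v` and `w`, without a
normalisation of the representatives. -/
theorem smooth_pair [Infinite k] (hq : IsPow p q) (hF : IsDGZ q F) {P v w u : Fin 3 → k} {x y : k}
    (hx : x ≠ 0) (hy : y ≠ 0) (hP : P = fun i => x * v i + y * w i) (hu : det3 v w u ≠ 0)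
    (hFv : d1 q v = 0) (hdv : d2 q v ≠ 0) (hFw : d1 q w = 0) (hdw : d2 q w ≠ 0)
    (htv : det3 P (v ^ q) (v ^ q ^ 3) = 0) (htw : det3 P (w ^ q) (w ^ q ^ 3) ≠ 0)
    (hc : Crit F P) : False := by
  classical
  obtain ⟨c, hc'⟩ := Infinite.exists_notMem_finset ({0, x⁻¹} : Finset k)
  simp only [Finset.mem_insert, Finset.mem_singleton, not_or] at hc'
  obtain ⟨hc0, hc1⟩ := hc'
  have hxc : 1 - x * c ≠ 0 := by
    intro h
    apply hc1
    field_simp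
    linear_combination -h
  have hPv : ∀ i, P i = x * v i + y * w i := fun i => by rw [hP]
  have scale : ∀ (c : k) (v : Fin 3 → k), det3 P ((fun i => c * v i) ^ q) ((fun i => c * v i) ^ q ^ 3)
      = c ^ q * c ^ q ^ 3 * det3 P (v ^ q) (v ^ q ^ 3) := by
    intro c v
    simp only [det3, Pi.pow_apply, mul_pow]; ring
  have hyc : y / (1 - x * c) ≠ 0 := div_ne_zero hy hxc
  -- `Q₁ = v - c P` with `c ≠ 0, 1/x` makes both `v` and `w` proportional to points `P + Y Q₁` with `Y`
  -- finite and nonzero.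
  refine smooth_aux hq hF (P := P) (Q1 := fun i => v i - c * P i) (Q2 := u)
    (V := fun i => c⁻¹ * v i) (W := fun i => (y / (1 - x * c)) * w i)
    (δ := c⁻¹) (ω := - x / (1 - x * c)) (inv_ne_zero hc0)
    (div_ne_zero (neg_ne_zero.2 hx) hxc) ?_ ?_ ?_ ?_ ?_ ?_ ?_ ?_ ?_ hc
  · have : det3 P (fun i => v i - c * P i) u = - (y * det3 v w u) := by
      simp only [det3, hPv]; ring
    rw [this]
    exact neg_ne_zero.2 (mul_ne_zero hy hu)
  · funext i
    field_simp; ring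
  · funext i
    field_simp
    rw [hPv]; ring
  · rw [d1_smul, hFv, mul_zero]
  · rw [d2_smul]; exact mul_ne_zero (pow_ne_zero _ (inv_ne_zero hc0)) hdv
  · rw [d1_smul, hFw, mul_zero]
  · rw [d2_smul]; exact mul_ne_zero (pow_ne_zero _ hyc) hdw
  · rw [scale, htv, mul_zero]
  · rw [scale]
    exact mul_ne_zero (mul_ne_zero (pow_ne_zero _ hyc) (pow_ne_zero _ hyc)) htw

/-- If `D₁(v) = 0 ≠ D₂(v)`, then `Φ³v` is a combination of `v` and `Φv` in which `v` occurs: apply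
Cramer's rule in the basis `v, Φv, Φ²v`. -/
theorem frob_rec (hq : IsPow p q) {v : Fin 3 → k} (h1 : d1 q v = 0) (h2 : d2 q v ≠ 0) :
    ∃ a b, a ≠ 0 ∧ ∀ i, v i ^ q ^ 3 = a * v i + b * v i ^ q := by
  have h3 : det3 (v ^ q ^ 3) (v ^ q) (v ^ q ^ 2) = d2 q v ^ q := by
    have := d2_pow hq v 1
    rw [pow_one] at this
    rw [← this, d2, ← pow_mul, ← pow_mul, (by ring : q * q = q ^ 2), (by ring : q * q ^ 2 = q ^ 3)]
    simp only [det3]; ring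
  refine ⟨d2 q v ^ q / d2 q v, det3 v (v ^ q ^ 3) (v ^ q ^ 2) / d2 q v,
    div_ne_zero (pow_ne_zero _ h2) h2, fun i => ?_⟩
  have := det3_cramer' v (v ^ q) (v ^ q ^ 2) (v ^ q ^ 3) i
  change d2 q v * _ = _ * _ + _ + d1 q v * _ at this
  rw [h3, h1] at this
  rw [zero_mul, add_zero] at this
  apply mul_left_cancel₀ h2
  refine this.trans ?_
  simp only [Pi.pow_apply]
  field_simp

/-- A point on the line joining a smooth point `v` of `C` to `Φ v`, distinct from both. -/
theorem not_crit_join [Infinite k] (hq : IsPow p q) (hF : IsDGZ q F) {P v : Fin 3 → k} {x y : k}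
    (hx : x ≠ 0) (hy : y ≠ 0) (hP : ∀ i, P i = x * v i + y * v i ^ q)
    (h1 : d1 q v = 0) (h2 : d2 q v ≠ 0) : ¬ Crit F P := by
  obtain ⟨a, b, ha, hab⟩ := frob_rec hq h1 h2
  have e1 := d1_pow hq v 1
  have e2 := d2_pow hq v 1
  rw [pow_one] at e1 e2
  refine smooth_pair hq hF (v := v) (w := v ^ q) (u := v ^ q ^ 2) hx hy (funext hP) h2 h1 h2
    ?_ ?_ ?_ ?_
  · rw [e1, h1]; exact zero_pow (by have := hq.one_lt; omega)
  · rw [e2]; exact pow_ne_zero _ h2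
  · have : det3 P (v ^ q) (v ^ q ^ 3) = x * d1 q v := by
      simp only [d1, det3, hP, Pi.pow_apply]; ring
    rw [this, h1, mul_zero]
  · rw [← pow_mul, ← pow_mul, (by ring : q * q = q ^ 2), (by ring : q * q ^ 3 = q ^ 3 * q)]
    have h4 : ∀ i, v i ^ (q ^ 3 * q) = a ^ q * v i ^ q + b ^ q * v i ^ q ^ 2 := by
      intro i
      have := hq.add_pow (a * v i) (b * v i ^ q) 1
      rw [pow_one] at this
      rw [pow_mul, hab, this, mul_pow, mul_pow, ← pow_mul, (by ring : q * q = q ^ 2)]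
    have : det3 P (v ^ q ^ 2) (v ^ (q ^ 3 * q)) = - (a ^ q * x * d2 q v) := by
      simp only [d2, det3, hP, Pi.pow_apply, h4]; ring
    rw [this]
    exact neg_ne_zero.2 (mul_ne_zero (mul_ne_zero (pow_ne_zero _ ha) hx) h2)

/-- The case `P = Φv` with `Φ³v = a v + b Φv` and `a, b ≠ 0`. The points `v`, `P`, `Φ³v` are distinct and
collinear; `P = Φv` lies on the tangent line at `v` but not on the one at `Φ³v`. -/
theorem not_crit_generic [Infinite k] (hq : IsPow p q) (hF : IsDGZ q F) {v : Fin 3 → k} {a b : k}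
    (h1 : d1 q v = 0) (h2 : d2 q v ≠ 0) (ha : a ≠ 0) (hb : b ≠ 0)
    (hab : ∀ i, v i ^ q ^ 3 = a * v i + b * v i ^ q) : ¬ Crit F (v ^ q) := by
  have h4 : ∀ i, v i ^ (q ^ 3 * q) = a ^ q * v i ^ q + b ^ q * v i ^ q ^ 2 := by
    intro i
    have := hq.add_pow (a * v i) (b * v i ^ q) 1
    rw [pow_one] at this
    rw [pow_mul, hab, this, mul_pow, mul_pow, ← pow_mul, (by ring : q * q = q ^ 2)]
  have h6 : ∀ i, v i ^ (q ^ 3 * q ^ 3) = a ^ q ^ 3 * v i ^ q ^ 3 + b ^ q ^ 3 * v i ^ (q ^ 3 * q) := by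
    intro i
    rw [pow_mul (v i) (q ^ 3) (q ^ 3), hab, hq.add_pow, mul_pow, mul_pow, ← pow_mul _ q,
      (by ring : q * q ^ 3 = q ^ 3 * q), hab]
  have e3 : det3 (v ^ q) (v ^ q ^ 2) (v ^ q ^ 3) = d2 q v ^ q := by
    have := d2_pow hq v 1
    rw [pow_one] at this
    rw [← this, d2, ← pow_mul, ← pow_mul, (by ring : q * q = q ^ 2), (by ring : q * q ^ 2 = q ^ 3)]
  refine smooth_pair hq hF (v := v) (w := v ^ q ^ 3) (u := v ^ q ^ 2) (x := - a / b) (y := b⁻¹)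
    (div_ne_zero (neg_ne_zero.2 ha) hb) (inv_ne_zero hb) ?_ ?_ h1 h2 ?_ ?_ ?_ ?_
  · funext i
    simp only [Pi.pow_apply, hab]
    field_simp; ring
  · have : det3 v (v ^ q ^ 3) (v ^ q ^ 2) = b * d2 q v := by
      simp only [d2, det3, Pi.pow_apply, hab]; ring
    rw [this]; exact mul_ne_zero hb h2
  · rw [d1_pow hq, h1]; exact zero_pow (pow_ne_zero _ (by have := hq.one_lt; omega))
  · rw [d2_pow hq]; exact pow_ne_zero _ h2
  · simp only [det3]; ring
  · rw [← pow_mul, ← pow_mul]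
    have : det3 (v ^ q) (v ^ (q ^ 3 * q)) (v ^ (q ^ 3 * q ^ 3)) =
        a ^ q ^ 3 * b ^ q * det3 (v ^ q) (v ^ q ^ 2) (v ^ q ^ 3) := by
      simp only [det3, Pi.pow_apply, h6, h4]; ring
    rw [this, e3]
    exact mul_ne_zero (mul_ne_zero (pow_ne_zero _ ha) (pow_ne_zero _ hb)) (pow_ne_zero _ h2)

end

/-! ### Points with Φ³P = P, and points over 𝔽_{q²} on rational lines -/

section
variable {k : Type*} [Field k] {p q : ℕ} [Fact p.Prime] [CharP k p]
  {F : MvPolynomial (Fin 3) k}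

/-- The case `Φ³P = P` as points of the plane, with `D₂(P) ≠ 0`. Here `P` is a smooth point of `C`, so
`μ = 1`. The tangent line at `P` passes through `ΦP`; it has contact of order at least three with `C`
at `P`, and meets `C` simply at `ΦP`. With `Q₁ = ΦP - P` and `Q₂ = Φ²P` the criterion would apply to
`ω = 1` and the double root `δ = 0`, but `G(S, 0) = -a S`. -/
theorem not_crit_cycle [Infinite k] (hq : IsPow p q) (hF : IsDGZ q F) {P : Fin 3 → k} {a : k}
    (h2 : d2 q P ≠ 0) (ha : a ≠ 0) (hab : ∀ i, P i ^ q ^ 3 = a * P i) : ¬ Crit F P := by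
  intro hc
  have hq1 := hq.one_lt
  set Q1 : Fin 3 → k := fun i => P i ^ q - P i with hQ1
  set Q2 : Fin 3 → k := P ^ q ^ 2 with hQ2
  have hdet : det3 P Q1 Q2 = d2 q P := by
    simp only [d2, det3, hQ1, hQ2, Pi.pow_apply]; ring
  have h1 : d1 q P = 0 := by
    simp only [d1, det3, Pi.pow_apply, hab]; ring
  have hFP := (hF.eval_eq_zero h2).2 h1
  have hX : Polynomial.X ∣ aeval (blow P Q1 Q2) F := by
    rw [Polynomial.X_dvd_iff, Polynomial.coeff_zero_eq_eval_zero, ← Polynomial.C_0, eval_blow]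
    apply Polynomial.funext
    intro x
    rw [eval_line, Polynomial.eval_C]
    convert hFP using 3
    simp
  obtain ⟨G, hG⟩ := hX
  have hmap : ∀ s, Polynomial.X * G.map (Polynomial.evalRingHom s) =
      aeval (line P (fun i => Q1 i + s * Q2 i)) F := by
    intro s
    rw [← map_blow, hG, Polynomial.map_mul, Polynomial.map_X]
  have e0 : ∀ R : Fin 3 → k, (fun i => P i + 0 * R i) = P := by intro R; funext i; ring
  have hg0 : G.eval (Polynomial.C 0) = Polynomial.C (-a) * Polynomial.X := by
    apply Polynomial.funext
    intro s
    have d := hF.deriv_eq hq P (fun i => Q1 i + s * Q2 i) 0 (by rw [e0]; exact hFP)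
    rw [e0, ← hmap, Polynomial.derivative_mul, Polynomial.derivative_X, one_mul,
      Polynomial.eval_add, Polynomial.eval_mul, Polynomial.eval_X, zero_mul, add_zero] at d
    have e1 : (G.map (Polynomial.evalRingHom s)).eval 0 = (G.eval (Polynomial.C 0)).eval s := by
      simp
    rw [e1] at d
    apply mul_left_cancel₀ h2
    rw [d]
    simp only [hQ1, hQ2, d2, det3, Pi.pow_apply, hab, Polynomial.eval_mul, Polynomial.eval_C,
      Polynomial.eval_X]
    ring
  have hXG : ¬ Polynomial.X ∣ G := by
    rw [Polynomial.X_dvd_iff, Polynomial.coeff_zero_eq_eval_zero, ← Polynomial.C_0, hg0]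
    simpa using ha
  have hm0 := hmap 0
  have e2 : (fun i => Q1 i + 0 * Q2 i) = Q1 := by funext i; ring
  rw [e2] at hm0
  set G0 := G.map (Polynomial.evalRingHom 0) with hG0
  have eP : (fun i => P i + 1 * Q1 i) = P ^ q := by
    funext i; simp only [hQ1, Pi.pow_apply]; ring
  have d2P : d2 q (P ^ q) = d2 q P ^ q := by simpa using d2_pow hq P 1
  have d1P : d1 q (P ^ q) = 0 := by
    have := d1_pow hq P 1
    rw [pow_one, h1] at this
    rw [this]; exact zero_pow (by omega)
  have h2' : d2 q (P ^ q) ≠ 0 := by rw [d2P]; exact pow_ne_zero _ h2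
  have hFQ : aeval (P ^ q) F = 0 := (hF.eval_eq_zero h2').2 d1P
  have z1 : G0.eval 1 = 0 := by
    have := congrArg (Polynomial.eval 1) hm0
    rw [eval_line, eP, hFQ] at this
    simpa using this
  have z2 : (Polynomial.derivative G0).eval 1 ≠ 0 := by
    intro h
    have d := hF.deriv_eq hq P Q1 1 (by rw [eP]; exact hFQ)
    rw [eP, ← hm0, Polynomial.derivative_mul, Polynomial.derivative_X, one_mul,
      Polynomial.eval_add, Polynomial.eval_mul, Polynomial.eval_X, h, z1, mul_zero, add_zero,
      mul_zero] at d
    rw [← pow_mul, ← pow_mul, (by ring : q * q = q ^ 2), (by ring : q * q ^ 3 = q ^ 3 * q)] at d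
    have h4 : ∀ i, P i ^ (q ^ 3 * q) = a ^ q * P i ^ q := fun i => by
      rw [pow_mul, hab, mul_pow]
    have : det3 Q1 (P ^ q ^ 2) (P ^ (q ^ 3 * q)) = a ^ q * d2 q P := by
      simp only [hQ1, d2, det3, Pi.pow_apply, h4]; ring
    rw [this] at d
    exact mul_ne_zero (pow_ne_zero _ ha) h2 d.symm
  -- On the tangent line `D₁` is divisible by `Y ^ (q + 1)`, and `q + 1 ≥ 3`.
  have hX3 : (Polynomial.X : Polynomial k) ^ 3 ∣ d2 q (line P Q1) * aeval (line P Q1) F := by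
    rw [hF.aeval_eq]
    have e : d1 q (line P Q1) = Polynomial.X ^ q * (Polynomial.X * det3
        (fun i => Polynomial.C (Q1 i)) (fun i => Polynomial.C (Q1 i) ^ q)
        (fun i => Polynomial.C (a * P i))) + Polynomial.X ^ q ^ 3 *
        det3 (line P Q1) (line P Q1 ^ q) (fun i => Polynomial.C (Q1 i) ^ q ^ 3) := by
      have l1 : ∀ i, line P Q1 i ^ q = Polynomial.C (P i) ^ q + Polynomial.X ^ q *
          Polynomial.C (Q1 i) ^ q := fun i => by
        have := hq.add_pow (Polynomial.C (P i)) (Polynomial.X * Polynomial.C (Q1 i)) 1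
        rw [pow_one] at this
        rw [line, this, mul_pow]
      have l3 : ∀ i, line P Q1 i ^ q ^ 3 = Polynomial.C (a * P i) + Polynomial.X ^ q ^ 3 *
          Polynomial.C (Q1 i) ^ q ^ 3 := fun i => by
        rw [line, hq.add_pow, mul_pow, ← Polynomial.C_pow, hab]
      have lq : ∀ i, Polynomial.C (Q1 i) = Polynomial.C (P i) ^ q - Polynomial.C (P i) := fun i => by
        rw [hQ1, ← Polynomial.C_pow, ← Polynomial.C_sub]
      simp only [d1, det3, Pi.pow_apply, l1, l3]
      generalize Polynomial.C (Q1 0) ^ q = r0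
      generalize Polynomial.C (Q1 1) ^ q = r1
      generalize Polynomial.C (Q1 2) ^ q = r2
      simp only [line, lq, Polynomial.C_mul]
      ring
    rw [e]
    refine dvd_add ?_ ?_
    · obtain ⟨j, hj⟩ := Nat.exists_eq_add_of_le (show 2 ≤ q from hq1)
      rw [← mul_assoc, ← pow_succ]
      exact (pow_dvd_pow _ (by omega)).mul_right _
    · refine (pow_dvd_pow _ ?_).mul_right _
      have : q < q ^ 2 := by nlinarith
      have : q ^ 2 < q ^ 3 := Nat.pow_lt_pow_right hq1 (by norm_num)
      omega
  have hX3' := Polynomial.prime_X.pow_dvd_of_dvd_mul_left 3 (by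
    rw [Polynomial.X_dvd_iff, Polynomial.coeff_zero_eq_eval_zero]
    have := map_d2 (Polynomial.evalRingHom 0) q (line P Q1)
    rw [Polynomial.coe_evalRingHom] at this
    rw [this]
    simp only [line_eval, e0]
    exact h2) hX3
  rw [← hm0, pow_succ', mul_dvd_mul_iff_left Polynomial.X_ne_zero] at hX3'
  have := hc Q1 Q2 (by rwa [hdet]) 1 G (by rw [hG, pow_one]) hXG 1 0 2 z1 z2
    (by rwa [Polynomial.C_0, sub_zero])
  rw [hg0] at this
  have := deriv_of_sq_dvd this
  simp [ha] at this

/-- The case `P = [1 : α : 0]` with `α ∈ 𝔽_{q²} \ 𝔽_q`. In the standard frame `μ = q - 1`. With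
`γ = α ^ q - α`, on `S = 0` one has `(γ + Y ^ q - Y) ^ q * G(0, Y) = Y * (Y ^ (q² - 1) - 1) ^ q`. So `ω = 0`
is a simple root and `δ = γ`, which corresponds to the conjugate point `ΦP`, is a root of
multiplicity `q`. But the line through `ΦP` in the direction `Q₂` meets `C` at `ΦP` with multiplicity
`q - 1` only. -/
theorem not_crit_quad [Infinite k] (hq : IsPow p q) (hF : IsDGZ q F) {α : k}
    (h1 : α ^ q ≠ α) (h2 : α ^ q ^ 2 = α) : ¬ Crit F ![1, α, 0] := by
  intro hc
  have hq1 := hq.one_lt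
  have hq0 : q ≠ 0 := by omega
  have hqq : q < q ^ 2 := by nlinarith
  have hqqq : q ^ 2 < q ^ 3 := Nat.pow_lt_pow_right hq1 (by norm_num)
  obtain ⟨γ, hγ⟩ : ∃ γ, γ = α ^ q - α := ⟨_, rfl⟩
  have hγ0 : γ ≠ 0 := by rw [hγ]; exact sub_ne_zero.2 h1
  have hγq : γ ^ q = -γ := by
    have := hq.sub_pow (α ^ q) α 1
    rw [pow_one, ← pow_mul, (by ring : q * q = q ^ 2), h2] at this
    rw [hγ, this]; ring
  have hγq2 : γ ^ q ^ 2 = γ := by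
    have := hq.sub_pow 0 γ 1
    rw [pow_one, zero_pow (by omega), zero_sub, zero_sub, hγq, neg_neg] at this
    rw [sq, pow_mul, hγq, this]
  have hα3 : α ^ q ^ 3 = α ^ q := by
    rw [(by ring : q ^ 3 = q ^ 2 * q), pow_mul, h2]
  set P : Fin 3 → k := ![1, α, 0] with hP
  set Q1 : Fin 3 → k := ![0, 1, 0] with hQ1
  set Q2 : Fin 3 → k := ![0, 0, 1] with hQ2
  have hdet : det3 P Q1 Q2 ≠ 0 := by simp [det3, hP, hQ1, hQ2]
  obtain ⟨e2, he2⟩ : ∃ e, q ^ 2 = e + 1 := ⟨q ^ 2 - 1, by omega⟩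
  obtain ⟨e1, he1⟩ : ∃ e, q = e + 1 := ⟨q - 1, by omega⟩
  obtain ⟨e3, he3⟩ : ∃ e, q ^ 3 = e + 1 + q := ⟨q ^ 3 - q - 1, by omega⟩
  have he1' : e1 ≠ 0 := by omega
  have he2' : e2 ≠ 0 := by omega
  obtain ⟨G, hG, hG0⟩ : ∃ G : Polynomial (Polynomial k), aeval (blow P Q1 Q2) F =
      Polynomial.X ^ e1 * G ∧ G.eval 0 = Polynomial.X ^ e1 := by
    let Y : Polynomial (Polynomial k) := Polynomial.X
    let S : Polynomial (Polynomial k) := Polynomial.C Polynomial.X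
    let A : Polynomial (Polynomial k) := Polynomial.C (Polynomial.C α)
    let g : Polynomial (Polynomial k) := Polynomial.C (Polynomial.C γ)
    have hgA : A ^ q = A + g := by
      simp only [A, g, hγ, ← Polynomial.C_pow, ← Polynomial.C_add, add_sub_cancel]
    have hA2 : A ^ q ^ 2 = A := by simp only [A, ← Polynomial.C_pow, h2]
    have hA3 : A ^ q ^ 3 = A + g := by
      rw [← hgA]; simp only [A, ← Polynomial.C_pow, hα3]
    -- `u` and `w` are `D₂ / Y` and `D₁ / Y ^ q` on `P + Y (Q₁ + S Q₂)`.
    let u : Polynomial (Polynomial k) := (g + Y ^ q - Y) * (S ^ q ^ 2 * Y ^ e2 - S) - (Y ^ e2 - 1) * (S ^ q * Y ^ q - S * Y)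
    let w : Polynomial (Polynomial k) := (g - Y) * (S ^ q ^ 3 * Y ^ (e3 + 1) - S ^ q) + (S ^ q ^ 3 * Y ^ q ^ 3 - S * Y) -
      Y ^ (e3 + 1) * (S ^ q * Y ^ q - S * Y)
    have b0 : blow P Q1 Q2 0 = 1 := by simp [blow, hP, hQ1, hQ2]
    have b1 : blow P Q1 Q2 1 = A + Y := by simp [blow, hP, hQ1, hQ2, A, Y]
    have b2 : blow P Q1 Q2 2 = S * Y := by
      simp [blow, hP, hQ1, hQ2, S, Y]
    have hd2 : d2 q (blow P Q1 Q2) = Y * u := by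
      have l1 := hq.add_pow A Y 1
      rw [pow_one] at l1
      have l2 := hq.add_pow A Y 2
      have y2 : Y ^ q ^ 2 = Y ^ e2 * Y := by rw [he2, pow_succ]
      simp only [d2, det3, Pi.pow_apply, b0, b1, b2, l1, l2, hgA, hA2, mul_pow, u, one_pow, y2]
      ring
    have hd1 : d1 q (blow P Q1 Q2) = Y ^ q * w := by
      have l1 := hq.add_pow A Y 1
      rw [pow_one] at l1
      have l2 := hq.add_pow A Y 3
      have y2 : Y ^ q ^ 3 = Y ^ (e3 + 1) * Y ^ q := by rw [he3, pow_add]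
      simp only [d1, det3, Pi.pow_apply, b0, b1, b2, l1, l2, hgA, hA3, mul_pow, w, one_pow, y2]
      ring
    have hu0 : u.eval 0 = - Polynomial.C γ * Polynomial.X := by
      simp [u, S, Y, g, he2', hq0]
    have hw0 : w.eval 0 = - Polynomial.C γ * Polynomial.X ^ q := by
      simp [w, S, Y, g, hq0]
    have key : u * aeval (blow P Q1 Q2) F = Y ^ e1 * w := by
      apply mul_left_cancel₀ (Polynomial.X_ne_zero (R := Polynomial k))
      have := hF.aeval_eq (blow P Q1 Q2)
      rw [hd2, hd1] at this
      change Y * _ = Y * _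
      have y1 : Y ^ q = Y ^ e1 * Y := by rw [← pow_succ, ← he1]
      rw [y1] at this
      linear_combination this
    have hYu : ¬ Y ∣ u := by
      change ¬ Polynomial.X ∣ u
      rw [Polynomial.X_dvd_iff, Polynomial.coeff_zero_eq_eval_zero, hu0]
      simp [hγ0]
    obtain ⟨G, hG⟩ := Polynomial.prime_X.pow_dvd_of_dvd_mul_left e1 hYu (Dvd.intro _ key.symm)
    refine ⟨G, hG, ?_⟩
    have k2 : u * G = w := by
      apply mul_left_cancel₀ (pow_ne_zero e1 (Polynomial.X_ne_zero (R := Polynomial k)))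
      rw [hG] at key
      change _ = Y ^ e1 * w
      rw [← key]; ring
    have k3 := congrArg (Polynomial.eval 0) k2
    rw [Polynomial.eval_mul, hu0, hw0, he1, pow_succ] at k3
    have hne : - Polynomial.C γ * Polynomial.X ≠ 0 :=
      mul_ne_zero (neg_ne_zero.2 (Polynomial.C_ne_zero.2 hγ0)) Polynomial.X_ne_zero
    apply mul_left_cancel₀ hne
    rw [k3]; ring
  have hXG : ¬ Polynomial.X ∣ G := by
    rw [Polynomial.X_dvd_iff, Polynomial.coeff_zero_eq_eval_zero, hG0]
    exact pow_ne_zero _ Polynomial.X_ne_zero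
  have hm := map_blow P Q1 Q2 F 0
  have q2 : (fun i => Q1 i + 0 * Q2 i) = Q1 := by funext i; ring
  rw [q2, hG, Polynomial.map_mul, Polynomial.map_pow, Polynomial.map_X] at hm
  set G0 := G.map (Polynomial.evalRingHom 0) with hG0d
  have star : (Polynomial.C γ + Polynomial.X ^ q - Polynomial.X) ^ q * G0 =
      Polynomial.X * (Polynomial.X ^ e2 - 1) ^ q := by
    apply mul_left_cancel₀ (pow_ne_zero e1 (Polynomial.X_ne_zero (R := k)))
    apply Polynomial.funext
    intro y
    have e := congrArg (Polynomial.eval y) hm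
    have hv : (fun i => P i + y * Q1 i) = ![1, α + y, 0] := by
      funext i; fin_cases i <;> simp [hP, hQ1]
    rw [eval_line, hv] at e
    have l := hF.line_z hq (α + y)
    rw [← e, hq.add_pow, h2] at l
    have a1 := hq.add_pow α y 1
    rw [pow_one] at a1
    rw [a1] at l
    have y1 : y ^ q = y ^ e1 * y := by rw [← pow_succ, ← he1]
    have y2 : y ^ q ^ 2 = y ^ e2 * y := by rw [he2, pow_succ]
    have l' : (γ + y ^ q - y) ^ q * (y ^ e1 * G0.eval y) = (y * (y ^ e2 - 1)) ^ q := by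
      rw [hγ]
      simp only [Polynomial.eval_mul, Polynomial.eval_pow, Polynomial.eval_X] at l
      convert l using 3
      · ring
      · rw [y2]; ring
    simp only [Polynomial.eval_mul, Polynomial.eval_pow, Polynomial.eval_X, Polynomial.eval_sub,
      Polynomial.eval_add, Polynomial.eval_C, Polynomial.eval_one]
    rw [mul_pow, y1] at l'
    rw [y1]
    linear_combination l'
  have z1 : G0.eval 0 = 0 := by
    have := congrArg (Polynomial.eval 0) star
    simpa [hq0, hγ0] using this
  have z2 : (Polynomial.derivative G0).eval 0 ≠ 0 := by
    intro h
    have := congrArg (fun f => (Polynomial.derivative f).eval 0) star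
    simp only [Polynomial.derivative_mul, Polynomial.eval_add, Polynomial.eval_mul, z1, h,
      mul_zero, add_zero, Polynomial.derivative_X, Polynomial.eval_X, zero_mul, one_mul] at this
    simp [he2'] at this
    exact pow_ne_zero q (neg_ne_zero.2 one_ne_zero) this.symm
  have z3 : (Polynomial.X - Polynomial.C γ) ^ q ∣ G0 := by
    refine (Polynomial.prime_X_sub_C γ).pow_dvd_of_dvd_mul_left q
      (a := (Polynomial.C γ + Polynomial.X ^ q - Polynomial.X) ^ q) ?_ ?_
    · intro h
      have := Polynomial.dvd_iff_isRoot.1 h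
      simp [hγq, hq0, hγ0] at this
    · rw [star]
      refine (pow_dvd_pow_of_dvd (Polynomial.dvd_iff_isRoot.2 ?_) q).mul_left _
      have : γ * (γ ^ e2 - 1) = 0 := by
        have y2 : γ ^ q ^ 2 = γ ^ e2 * γ := by rw [he2, pow_succ]
        rw [hγq2] at y2
        linear_combination -y2
      simpa using (mul_eq_zero.1 this).resolve_left hγ0
  have hd := hc Q1 Q2 hdet e1 G hG hXG 0 γ q z1 z2 z3
  have ev := eval_blow P Q1 Q2 F γ
  rw [hG, Polynomial.eval_mul] at ev
  have hd' : Polynomial.X ^ q ∣ aeval (line (fun i => P i + γ * Q1 i) (fun i => γ * Q2 i)) F := by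
    rw [← ev]; exact hd.mul_left _
  set ℓ := line (fun i => P i + γ * Q1 i) (fun i => γ * Q2 i) with hℓ
  have m0 : ℓ 0 = 1 := by simp [hℓ, line, hP, hQ1, hQ2]
  have m1 : ℓ 1 = Polynomial.C (α ^ q) := by simp [hℓ, line, hP, hQ1, hQ2, hγ]
  have m2 : ℓ 2 = Polynomial.C γ * Polynomial.X := by simp [hℓ, line, hP, hQ1, hQ2]
  have f1 : (α ^ q) ^ q = α := by rw [← pow_mul, ← sq, h2]
  have f2 : (α ^ q) ^ q ^ 2 = α ^ q := by rw [← pow_mul, mul_comm, pow_mul, h2]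
  have f3 : (α ^ q) ^ q ^ 3 = α := by rw [← pow_mul, mul_comm, pow_mul, hα3, f1]
  obtain ⟨Z, hZ⟩ : ∃ Z : Polynomial k, Z = Polynomial.X ^ e2 - 1 := ⟨_, rfl⟩
  have hZ0 : Z.eval 0 ≠ 0 := by simp [hZ, he2']
  have hz : (Polynomial.C γ * Polynomial.X) ^ q ^ 2 - Polynomial.C γ * Polynomial.X =
      Polynomial.C γ * Polynomial.X * Z := by
    rw [mul_pow, ← Polynomial.C_pow, hγq2, hZ, he2, pow_succ]; ring
  -- On the line `ℓ` through `ΦP` in the direction `Q₂`, `D₂` vanishes to order `1` and `D₁` to order `q`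
  -- at `ΦP`, which contradicts `S ^ q ∣ F`.
  have c2 : d2 q ℓ = Polynomial.C (-γ) * (Polynomial.C γ * Polynomial.X * Z) := by
    rw [← hz]
    simp only [d2, det3, Pi.pow_apply, m0, m1, m2, one_pow, ← Polynomial.C_pow, f1, f2, hγ,
      Polynomial.C_neg, Polynomial.C_sub]
    ring
  have c1 : d1 q ℓ = Polynomial.C (-γ) * (Polynomial.C γ * Polynomial.X * Z) ^ q := by
    have := hq.sub_pow ((Polynomial.C γ * Polynomial.X) ^ q ^ 2) (Polynomial.C γ * Polynomial.X) 1
    rw [pow_one, ← pow_mul, (by ring : q ^ 2 * q = q ^ 3)] at this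
    rw [← hz, this]
    have hh : Polynomial.C γ = Polynomial.C (α ^ q) - Polynomial.C α := by rw [hγ, Polynomial.C_sub]
    simp only [d1, det3, Pi.pow_apply, m0, m1, m2, one_pow, ← Polynomial.C_pow, f1, f3]
    rw [Polynomial.C_neg]
    generalize (Polynomial.C γ * Polynomial.X) ^ q ^ 3 = A
    generalize (Polynomial.C γ * Polynomial.X) ^ q = B
    generalize Polynomial.C γ * Polynomial.X = D
    rw [hh]
    ring
  have key := hF.aeval_eq ℓ
  rw [c1, c2] at key
  have hne : Polynomial.C (-γ) ≠ 0 := Polynomial.C_ne_zero.2 (neg_ne_zero.2 hγ0)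
  obtain ⟨f, hf⟩ := hd'
  have key2 : Polynomial.C γ * (Polynomial.X * Z * f) = Polynomial.C γ ^ q * Z ^ q := by
    apply mul_left_cancel₀ (mul_ne_zero hne (pow_ne_zero q (Polynomial.X_ne_zero (R := k))))
    rw [hf] at key
    rw [mul_pow, mul_pow] at key
    linear_combination key
  have := congrArg (Polynomial.eval 0) key2
  simp only [Polynomial.eval_mul, Polynomial.eval_pow, Polynomial.eval_C, Polynomial.eval_X,
    zero_mul, mul_zero] at this
  exact mul_ne_zero (pow_ne_zero _ hγ0) (pow_ne_zero _ hZ0) this.symm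

end

/-! ### Points on the line joining a smooth point to its Frobenius image -/

/-- If `deg D < deg E` and `E` has no multiple root among the roots of `D`, then `E` has a root which is
not a root of `D`. -/
theorem exists_root {k : Type*} [Field k] [IsAlgClosed k] {D E : Polynomial k} (hD : D ≠ 0)
    (hs : ∀ s, D.eval s = 0 → E.eval s = 0 → (Polynomial.derivative E).eval s ≠ 0)
    (hlt : D.natDegree < E.natDegree) : ∃ s, E.eval s = 0 ∧ D.eval s ≠ 0 := by
  classical
  by_contra! h
  have hE : E ≠ 0 := by rintro rfl; simp at hlt
  have hnd : E.roots.Nodup := by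
    rw [Multiset.nodup_iff_count_le_one]
    intro s
    rw [Polynomial.count_roots]
    by_contra! h1
    obtain ⟨h3, h2⟩ := (Polynomial.one_lt_rootMultiplicity_iff_isRoot hE).1 h1
    exact hs s (h s h3) h3 h2
  have hle : E.roots ≤ D.roots := by
    rw [Multiset.le_iff_subset hnd]
    intro s hs'
    rw [Polynomial.mem_roots hE] at hs'
    rw [Polynomial.mem_roots hD]
    exact h s hs'
  have h1 := Multiset.card_le_card hle
  have h2 := (IsAlgClosed.splits E).natDegree_eq_card_roots
  have h3 := D.card_roots'
  omega

section
variable {k : Type*} [Field k] {p q : ℕ} [Fact p.Prime] [CharP k p]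
  {F : MvPolynomial (Fin 3) k}

/-- Let `m` be the coefficients of a line through `P' = Φ⁻¹P` with `D₂(m) ≠ 0` and
`det(m, Φ²m, Φ³m) = 0`. The intersection `v = m × Φm` of the lines `m` and `Φm` is then a point of `C` with
`D₂(v) ≠ 0`. As `P` lies on the line `Φm`, which joins `v` and `Φv`, `not_crit_join` applies unless
`P` is `v` or `Φv`; the hypothesis `hP` excludes these. -/
theorem not_crit_of_dual [Infinite k] (hq : IsPow p q) (hF : IsDGZ q F) {P' m : Fin 3 → k}
    (hP0 : P' ≠ 0) (hP : d2 q (P' ^ q) ≠ 0 → d1 q (P' ^ q) ≠ 0)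
    (hm : m 0 * P' 0 + m 1 * P' 1 + m 2 * P' 2 = 0)
    (h1 : det3 m (m ^ q ^ 2) (m ^ q ^ 3) = 0) (h2 : d2 q m ≠ 0) : ¬ Crit F (P' ^ q) := by
  have hq1 := hq.one_lt
  have hq0 : q ≠ 0 := by omega
  set v : Fin 3 → k := cross m (m ^ q) with hv
  have fr : ∀ a b : k, ∀ j, (a - b) ^ q ^ j = a ^ q ^ j - b ^ q ^ j := hq.sub_pow
  have cp : ∀ a b : Fin 3 → k, ∀ j, cross a b ^ q ^ j = cross (a ^ q ^ j) (b ^ q ^ j) := by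
    intro a b j
    funext i
    fin_cases i <;> simp [cross, fr, mul_pow]
  have v1 : v ^ q = cross (m ^ q) (m ^ q ^ 2) := by
    have := cp m (m ^ q) 1
    rwa [pow_one, ← pow_mul, ← sq] at this
  have v2 : v ^ q ^ 2 = cross (m ^ q ^ 2) (m ^ q ^ 3) := by
    rw [hv, cp, ← pow_mul, (by ring : q * q ^ 2 = q ^ 3)]
  have v3 : v ^ q ^ 3 = cross (m ^ q ^ 3) (m ^ (q ^ 3 * q)) := by
    rw [hv, cp, ← pow_mul, (by ring : q * q ^ 3 = q ^ 3 * q)]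
  have D1 : det3 (m ^ q) (m ^ q ^ 2) (m ^ q ^ 3) = d2 q m ^ q := by
    have := d2_pow hq m 1
    rwa [pow_one, d2, ← pow_mul, ← pow_mul, (by ring : q * q = q ^ 2),
      (by ring : q * q ^ 2 = q ^ 3)] at this
  have E1 : det3 (m ^ q) (m ^ q ^ 3) (m ^ (q ^ 3 * q)) = 0 := by
    have := det3_pow1 hq m (m ^ q ^ 2) (m ^ q ^ 3)
    rw [h1, zero_pow hq0, ← pow_mul, ← pow_mul] at this
    rwa [(by ring : q ^ 2 * q = q ^ 3)] at this
  have hd2 : d2 q v ≠ 0 := by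
    have : d2 q v = d2 q m * d2 q m ^ q := by
      rw [← D1, d2, v1, v2, hv]
      simp only [d2, det3, cross, Matrix.cons_val]; ring
    rw [this]
    exact mul_ne_zero h2 (pow_ne_zero _ h2)
  have hd1 : d1 q v = 0 := by
    have : d1 q v = d2 q m * det3 (m ^ q) (m ^ q ^ 3) (m ^ (q ^ 3 * q)) := by
      rw [d1, v1, v3, hv]
      simp only [d2, det3, cross, Matrix.cons_val]; ring
    rw [this, E1, mul_zero]
  -- `P`, `v` and `Φv` all lie on the line `Φm`.
  have hPv : det3 v (v ^ q) (P' ^ q) = 0 := by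
    have e : (m 0 * P' 0 + m 1 * P' 1 + m 2 * P' 2) ^ q =
        m 0 ^ q * P' 0 ^ q + m 1 ^ q * P' 1 ^ q + m 2 ^ q * P' 2 ^ q := by
      have := hq.add_pow (m 0 * P' 0 + m 1 * P' 1) (m 2 * P' 2) 1
      have h := hq.add_pow (m 0 * P' 0) (m 1 * P' 1) 1
      rw [pow_one] at this h
      rw [this, h, mul_pow, mul_pow, mul_pow]
    rw [hm, zero_pow hq0] at e
    have : det3 v (v ^ q) (P' ^ q) =
        d2 q m * (m 0 ^ q * P' 0 ^ q + m 1 ^ q * P' 1 ^ q + m 2 ^ q * P' 2 ^ q) := by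
      rw [v1, hv]
      simp only [d2, det3, cross, Matrix.cons_val, Pi.pow_apply]; ring
    rw [this, ← e, mul_zero]
  set P := P' ^ q with hPd
  obtain ⟨x, hx⟩ : ∃ x, x = det3 P (v ^ q) (v ^ q ^ 2) / d2 q v := ⟨_, rfl⟩
  obtain ⟨y, hy⟩ : ∃ y, y = det3 v P (v ^ q ^ 2) / d2 q v := ⟨_, rfl⟩
  have hxy : ∀ i, P i = x * v i + y * v i ^ q := by
    intro i
    have := det3_cramer' v (v ^ q) (v ^ q ^ 2) P i
    rw [hPv, zero_mul, add_zero] at this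
    rw [hx, hy]
    field_simp
    rw [mul_comm]
    exact this
  by_cases hx0 : x = 0
  · exfalso
    have e : P = fun i => y * (v ^ q) i := by funext i; simp [hxy, hx0]
    have hy0 : y ≠ 0 := by
      rintro rfl
      apply hP0
      funext i
      have := congrFun e i
      simpa [hPd, hq0] using this
    have e1 := d1_pow hq v 1
    have e2 := d2_pow hq v 1
    rw [pow_one] at e1 e2
    rw [e, d2_smul, d1_smul, e1, e2, hd1] at hP
    refine hP (mul_ne_zero (pow_ne_zero _ hy0) (pow_ne_zero _ hd2)) ?_
    rw [zero_pow hq0, mul_zero]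
  by_cases hy0 : y = 0
  · exfalso
    have e : P = fun i => x * v i := by funext i; simp [hxy, hy0]
    rw [e, d2_smul, d1_smul, hd1] at hP
    exact hP (mul_ne_zero (pow_ne_zero _ hx0) hd2) (mul_zero _)
  exact not_crit_join hq hF hx0 hy0 hxy hd1 hd2

theorem eval_det3 (A B C : Fin 3 → Polynomial k) (s : k) : (det3 A B C).eval s =
    det3 (fun i => (A i).eval s) (fun i => (B i).eval s) (fun i => (C i).eval s) :=
  map_det3 (Polynomial.evalRingHom s) A B C

omit [Fact p.Prime] in
/-- Frobenius powers are constants for the derivative. -/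
theorem derivative_det3 (hq : IsPow p q) (A B C : Fin 3 → Polynomial k) {i j : ℕ} (hi : i ≠ 0)
    (hj : j ≠ 0) : Polynomial.derivative (det3 A (B ^ q ^ i) (C ^ q ^ j)) =
    det3 (fun i => Polynomial.derivative (A i)) (B ^ q ^ i) (C ^ q ^ j) := by
  simp only [det3, Polynomial.derivative_add, Polynomial.derivative_sub, Polynomial.derivative_mul,
    Pi.pow_apply, derivative_pow_q hq _ hi, derivative_pow_q hq _ hj]
  ring

/-- An element some Frobenius power of which is fixed by Frobenius is itself fixed. -/
theorem fix_of (hq : IsPow p q) {a : k} {j : ℕ} (h : a ^ q ^ (j + 1) = a ^ q ^ j) : a ^ q = a := by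
  rw [pow_succ', pow_mul] at h
  exact hq.pow_inj h

/-- The case `P = [1 : α : 0]` with `α ∉ 𝔽_{q²}`. The lines through `Φ⁻¹P = [1 : a : 0]` are
`m = (-a, 1, s)`. As a polynomial in `s`, `det(m, Φ²m, Φ³m)` is separable of degree `q³`, whereas
`D₂(m)` has degree at most `q²`; hence some `s` satisfies the hypotheses of `not_crit_of_dual`. -/
theorem not_crit_quad' [IsAlgClosed k] (hq : IsPow p q) (hF : IsDGZ q F) {α : k}
    (h2 : α ^ q ^ 2 ≠ α) : ¬ Crit F ![1, α, 0] := by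
  have hq1 := hq.one_lt
  have hq0 : q ≠ 0 := by omega
  have hqq : q < q ^ 2 := by nlinarith
  have hqqq : q ^ 2 < q ^ 3 := Nat.pow_lt_pow_right hq1 (by norm_num)
  obtain ⟨a, ha⟩ := IsAlgClosed.exists_pow_nat_eq α (n := q) (by omega)
  have ha2 : a ^ q ^ 2 ≠ a := by
    intro h
    apply h2
    rw [← ha, ← pow_mul, mul_comm, pow_mul, h]
  have ha1 : a ^ q ≠ a := by
    intro h
    apply ha2
    rw [sq, pow_mul, h, h]
  have ha3 : a ^ q ^ 3 ≠ a ^ q ^ 2 := fun h => ha1 (fix_of hq h)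
  have hP : ![1, α, 0] = (![1, a, 0] : Fin 3 → k) ^ q := by
    funext i; fin_cases i <;> simp [ha, hq0]
  let M : Fin 3 → Polynomial k := ![-Polynomial.C a, 1, Polynomial.X]
  have hMe : ∀ s, (fun i => (M i).eval s) = ![-a, 1, s] := by
    intro s; funext i; fin_cases i <;> simp [M]
  have neg : ∀ j, (-a) ^ q ^ j = -a ^ q ^ j := fun j => by
    have := hq.sub_pow 0 a j
    rwa [zero_sub, zero_pow (pow_ne_zero _ hq0), zero_sub] at this
  have neg' : ∀ j, (-Polynomial.C a) ^ q ^ j = Polynomial.C (-a ^ q ^ j) := fun j => by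
    rw [← Polynomial.C_neg, ← Polynomial.C_pow, neg]
  have hD : d2 q M = Polynomial.C (a ^ q - a) * Polynomial.X ^ q ^ 2 +
      Polynomial.C (a - a ^ q ^ 2) * Polynomial.X ^ q +
      Polynomial.C (a ^ q ^ 2 - a ^ q) * Polynomial.X := by
    have n1 := neg' 1
    rw [pow_one] at n1
    simp only [d2, det3, M, Pi.pow_apply, Matrix.cons_val, n1, neg', one_pow]
    simp only [Polynomial.C_sub, Polynomial.C_neg]
    ring
  have hE : det3 M (M ^ q ^ 2) (M ^ q ^ 3) = Polynomial.C (a ^ q ^ 2 - a) * Polynomial.X ^ q ^ 3 +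
      Polynomial.C (a - a ^ q ^ 3) * Polynomial.X ^ q ^ 2 +
      Polynomial.C (a ^ q ^ 3 - a ^ q ^ 2) * Polynomial.X := by
    simp only [det3, M, Pi.pow_apply, Matrix.cons_val, neg', one_pow]
    simp only [Polynomial.C_sub, Polynomial.C_neg]
    ring
  have hDn : (d2 q M).natDegree ≤ q ^ 2 := by
    rw [hD]
    compute_degree
    omega
  have hEn : q ^ 3 ≤ (det3 M (M ^ q ^ 2) (M ^ q ^ 3)).natDegree := by
    apply Polynomial.le_natDegree_of_ne_zero
    rw [hE]
    simp only [Polynomial.coeff_add, Polynomial.coeff_C_mul, Polynomial.coeff_X_pow,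
      Polynomial.coeff_X, if_neg hqqq.ne', if_neg (by omega : ¬ 1 = q ^ 3), if_true, mul_one,
      mul_zero, add_zero]
    exact sub_ne_zero.2 ha2
  have hD0 : d2 q M ≠ 0 := by
    intro h
    rw [hD] at h
    have := congrArg (fun f => Polynomial.coeff f (q ^ 2)) h
    simp only [Polynomial.coeff_add, Polynomial.coeff_C_mul, Polynomial.coeff_X_pow,
      Polynomial.coeff_X, if_neg hqq.ne', if_neg (by omega : ¬ 1 = q ^ 2), if_true, mul_one,
      mul_zero, add_zero, Polynomial.coeff_zero] at this
    exact ha1 (sub_eq_zero.1 this)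
  obtain ⟨s, hs1, hs2⟩ := exists_root hD0 (E := det3 M (M ^ q ^ 2) (M ^ q ^ 3)) (by
    intro s _ _
    rw [derivative_det3 hq _ _ _ two_ne_zero three_ne_zero, eval_det3]
    simp only [det3, M, Pi.pow_apply, Matrix.cons_val, neg', one_pow]
    simp
    intro h
    apply ha3
    linear_combination h) (by omega)
  have g1 : det3 (fun i => (M i).eval s) ((fun i => (M i).eval s) ^ q ^ 2)
      ((fun i => (M i).eval s) ^ q ^ 3) = 0 := by
    rw [← hs1, eval_det3]
    congr 1 <;> funext i <;> simp
  have g2 : d2 q (fun i => (M i).eval s) ≠ 0 := by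
    rwa [← Polynomial.coe_evalRingHom, ← map_d2]
  rw [hMe] at g1 g2
  rw [hP]
  refine not_crit_of_dual hq hF (m := ![-a, 1, s]) ?_ ?_ (by simp) g1 g2
  · intro h
    simpa using congrFun h 0
  · rw [← hP]
    intro h
    exact absurd (by simp [d2, det3, hq0]) h

/-- The case `D₁(P) ≠ 0 ≠ D₂(P)` with `P = [1 : α : β]`. The lines through `Φ⁻¹P = [1 : a : b]` are
`m = (-(a s + b), s, 1)`. As polynomials in `s`, `det(m, Φ²m, Φ³m)` has degree `q³ + q²` and `D₂(m)` has
degree at most `q² + q`, and the former has no multiple root at which the latter vanishes; hence some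
`s` satisfies the hypotheses of `not_crit_of_dual`. -/
theorem not_crit_indep [IsAlgClosed k] (hq : IsPow p q) (hF : IsDGZ q F) {α β : k}
    (h2 : d2 q ![1, α, β] ≠ 0) (h1 : d1 q ![1, α, β] ≠ 0) : ¬ Crit F ![1, α, β] := by
  have hq1 := hq.one_lt
  have hq0 : q ≠ 0 := by omega
  have hqq : q < q ^ 2 := by nlinarith
  have hqqq : q ^ 2 < q ^ 3 := Nat.pow_lt_pow_right hq1 (by norm_num)
  obtain ⟨a, ha⟩ := IsAlgClosed.exists_pow_nat_eq α (n := q) (by omega)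
  obtain ⟨b, hb⟩ := IsAlgClosed.exists_pow_nat_eq β (n := q) (by omega)
  have hP : ![1, α, β] = (![1, a, b] : Fin 3 → k) ^ q := by
    funext i; fin_cases i <;> simp [ha, hb]
  have h2' : d2 q ![1, a, b] ≠ 0 := by
    intro h
    have := d2_pow hq ![1, a, b] 1
    rw [pow_one, ← hP, h, zero_pow hq0] at this
    exact h2 this
  have ha1 : a ^ q ≠ a := by
    intro h
    apply h2'
    have : a ^ q ^ 2 = a := by rw [sq, pow_mul, h, h]
    simp [d2, det3, h, this]
    ring
  have ha2 : a ^ q ^ 2 ≠ a ^ q := fun h => ha1 (fix_of hq (j := 1) (by simpa using h))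
  have ha3 : a ^ q ^ 3 ≠ a ^ q ^ 2 := fun h => ha1 (fix_of hq h)
  let M : Fin 3 → Polynomial k :=
    ![-(Polynomial.C a * Polynomial.X + Polynomial.C b), Polynomial.X, 1]
  have hMe : ∀ s, (fun i => (M i).eval s) = ![-(a * s + b), s, 1] := by
    intro s; funext i; fin_cases i <;> simp [M]
  have neg' : ∀ j, (-(Polynomial.C a * Polynomial.X + Polynomial.C b)) ^ q ^ j =
      -(Polynomial.C (a ^ q ^ j) * Polynomial.X ^ q ^ j + Polynomial.C (b ^ q ^ j)) := fun j => by
    have := hq.sub_pow 0 (Polynomial.C a * Polynomial.X + Polynomial.C b) j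
    rw [zero_sub, zero_pow (pow_ne_zero _ hq0), zero_sub] at this
    rw [this, hq.add_pow, mul_pow, Polynomial.C_pow, Polynomial.C_pow]
  have hD : d2 q M = Polynomial.C (a ^ q ^ 2 - a ^ q) * Polynomial.X ^ (q ^ 2 + q) +
      (Polynomial.C (a - a ^ q ^ 2) * Polynomial.X ^ (q ^ 2 + 1) +
      Polynomial.C (a ^ q - a) * Polynomial.X ^ (q + 1) +
      Polynomial.C (b ^ q - b ^ q ^ 2) * Polynomial.X +
      Polynomial.C (b ^ q ^ 2 - b) * Polynomial.X ^ q +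
      Polynomial.C (b - b ^ q) * Polynomial.X ^ q ^ 2) := by
    have n1 := neg' 1
    rw [pow_one] at n1
    simp only [d2, det3, M, Pi.pow_apply, Matrix.cons_val, n1, neg', one_pow]
    simp only [Polynomial.C_sub, pow_add]
    ring
  have hE : det3 M (M ^ q ^ 2) (M ^ q ^ 3) =
      Polynomial.C (a ^ q ^ 3 - a ^ q ^ 2) * Polynomial.X ^ (q ^ 3 + q ^ 2) +
      (Polynomial.C (a - a ^ q ^ 3) * Polynomial.X ^ (q ^ 3 + 1) +
      Polynomial.C (a ^ q ^ 2 - a) * Polynomial.X ^ (q ^ 2 + 1) +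
      Polynomial.C (b ^ q ^ 2 - b ^ q ^ 3) * Polynomial.X +
      Polynomial.C (b ^ q ^ 3 - b) * Polynomial.X ^ q ^ 2 +
      Polynomial.C (b - b ^ q ^ 2) * Polynomial.X ^ q ^ 3) := by
    simp only [det3, M, Pi.pow_apply, Matrix.cons_val, neg', one_pow]
    simp only [Polynomial.C_sub, pow_add]
    ring
  have hDn : (d2 q M).natDegree ≤ q ^ 2 + q := by
    rw [hD]
    compute_degree
    omega
  have hEn : q ^ 3 + q ^ 2 ≤ (det3 M (M ^ q ^ 2) (M ^ q ^ 3)).natDegree := by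
    apply Polynomial.le_natDegree_of_ne_zero
    rw [hE]
    simp only [Polynomial.coeff_add, Polynomial.coeff_C_mul, Polynomial.coeff_X_pow,
      Polynomial.coeff_X, if_neg (by omega : ¬ q ^ 3 + q ^ 2 = q ^ 3 + 1),
      if_neg (by omega : ¬ q ^ 3 + q ^ 2 = q ^ 2 + 1), if_neg (by omega : ¬ 1 = q ^ 3 + q ^ 2),
      if_neg (by omega : ¬ q ^ 3 + q ^ 2 = q ^ 2), if_neg (by omega : ¬ q ^ 3 + q ^ 2 = q ^ 3),
      if_true, mul_one, mul_zero, add_zero]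
    exact sub_ne_zero.2 ha3
  have hD0 : d2 q M ≠ 0 := by
    intro h
    rw [hD] at h
    have := congrArg (fun f => Polynomial.coeff f (q ^ 2 + q)) h
    simp only [Polynomial.coeff_add, Polynomial.coeff_C_mul, Polynomial.coeff_X_pow,
      Polynomial.coeff_X, if_neg (by omega : ¬ q ^ 2 + q = q ^ 2 + 1),
      if_neg (by omega : ¬ q ^ 2 + q = q + 1), if_neg (by omega : ¬ 1 = q ^ 2 + q),
      if_neg (by omega : ¬ q ^ 2 + q = q), if_neg (by omega : ¬ q ^ 2 + q = q ^ 2),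
      if_true, mul_one, mul_zero, add_zero, Polynomial.coeff_zero] at this
    exact ha2 (sub_eq_zero.1 this)
  obtain ⟨s, hs1, hs2⟩ := exists_root hD0 (E := det3 M (M ^ q ^ 2) (M ^ q ^ 3)) (by
    intro s e1 e2 e3
    rw [derivative_det3 hq _ _ _ two_ne_zero three_ne_zero, eval_det3] at e3
    rw [eval_det3] at e2
    have e1' : d2 q (fun i => (M i).eval s) = 0 := by
      rwa [← Polynomial.coe_evalRingHom, ← map_d2]
    rw [hMe] at e1'
    have e1 := d2_pow hq ![-(a * s + b), s, 1] 1
    rw [e1', zero_pow (pow_ne_zero _ hq0), pow_one, d2, ← pow_mul, ← pow_mul, ← sq,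
      (by ring : q * q ^ 2 = q ^ 3)] at e1
    have c2 : (fun i => ((M ^ q ^ 2) i).eval s) = ![-(a * s + b), s, 1] ^ q ^ 2 := by
      rw [← hMe]; funext i; simp
    have c3 : (fun i => ((M ^ q ^ 3) i).eval s) = ![-(a * s + b), s, 1] ^ q ^ 3 := by
      rw [← hMe]; funext i; simp
    have c0 : (fun i => (Polynomial.derivative (M i)).eval s) = ![-a, 1, 0] := by
      funext i; fin_cases i <;> simp [M]
    rw [c2, c3, hMe] at e2
    rw [c2, c3, c0] at e3
    have ne : ∀ j, (-(a * s + b)) ^ q ^ j = -(a ^ q ^ j * s ^ q ^ j + b ^ q ^ j) := fun j => by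
      have := hq.sub_pow 0 (a * s + b) j
      rw [zero_sub, zero_pow (pow_ne_zero _ hq0), zero_sub] at this
      rw [this, hq.add_pow, mul_pow]
    have ne1 := ne 1
    rw [pow_one] at ne1
    obtain ⟨r, hr⟩ : ∃ r, r = s ^ q ^ 2 - s ^ q ^ 3 := ⟨_, rfl⟩
    obtain ⟨u, hu⟩ : ∃ u, u = -(a * s + b) := ⟨_, rfl⟩
    -- No vector `(u, t, 1)` is orthogonal to `Φ⁻¹P` and its first two Frobenius images
    -- simultaneously, as these are independent.
    have ker : ∀ u t, u + a * t + b = 0 → u + a ^ q * t + b ^ q = 0 →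
        u + a ^ q ^ 2 * t + b ^ q ^ 2 = 0 → False := by
      intro u t k0 k1 k2
      apply h2'
      simp only [d2, det3, Pi.pow_apply, Matrix.cons_val, one_pow]
      linear_combination (a ^ q ^ 2 - a ^ q) * k0 + (a - a ^ q ^ 2) * k1 + (a ^ q - a) * k2
    rw [← hu] at e1 e2 e3 ne1
    simp only [det3, Pi.pow_apply, Matrix.cons_val, one_pow] at e1 e2 e3
    have r1 : u ^ q ^ 3 - u ^ q ^ 2 = a * r := by rw [hr]; linear_combination e3
    have r2 : u ^ q ^ 2 * s ^ q ^ 3 - s ^ q ^ 2 * u ^ q ^ 3 = b * r := by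
      linear_combination e2 - s * r1 + u * hr - r * hu
    -- The vanishing of `D₂`, of `det(m, Φ²m, Φ³m)` and of its derivative is used here. If `r = 0`, the
    -- line `m` is rational; otherwise `Φm`, `Φ²m` and `Φ³m` all pass through `Φ⁻¹P`. Either
    -- way, `Φ⁻¹P` and its first two Frobenius images lie on a common line.
    by_cases hr0 : r = 0
    · rw [hr0] at r1 hr
      have s1 : s ^ q = s := fix_of hq (sub_eq_zero.1 hr.symm).symm
      have u1 : u ^ q = u := fix_of hq (j := 2) (by linear_combination r1)
      have s2 : s ^ q ^ 2 = s := by rw [sq, pow_mul, s1, s1]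
      have u2 : u ^ q ^ 2 = u := by rw [sq, pow_mul, u1, u1]
      have ne2 := ne 2
      rw [← hu, s2, u2] at ne2
      rw [s1, u1] at ne1
      exact ker u s (by linear_combination hu) (by linear_combination ne1)
        (by linear_combination ne2)
    · have k1 : u ^ q + a * s ^ q + b = 0 := by
        apply mul_left_cancel₀ hr0
        linear_combination e1 + u ^ q * hr - s ^ q * r1 - r2
      have k2 : u ^ q ^ 2 + a * s ^ q ^ 2 + b = 0 := by
        apply mul_left_cancel₀ hr0
        linear_combination u ^ q ^ 2 * hr - s ^ q ^ 2 * r1 - r2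
      have k3 : u ^ q ^ 3 + a * s ^ q ^ 3 + b = 0 := by
        apply mul_left_cancel₀ hr0
        linear_combination u ^ q ^ 3 * hr - s ^ q ^ 3 * r1 - r2
      have f1 := congrArg (· ^ q ^ 2) k1
      have f2 := congrArg (· ^ q ^ 1) k2
      simp only [hq.add_pow, mul_pow] at f1 f2
      rw [zero_pow (pow_ne_zero _ hq0), ← pow_mul, ← pow_mul, (by ring : q * q ^ 2 = q ^ 3)] at f1
      rw [zero_pow (pow_ne_zero _ hq0), ← pow_mul, ← pow_mul, (by ring : q ^ 2 * q ^ 1 = q ^ 3),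
        pow_one] at f2
      exact ker _ _ k3 f2 f1) (by omega)
  have g1 : det3 (fun i => (M i).eval s) ((fun i => (M i).eval s) ^ q ^ 2)
      ((fun i => (M i).eval s) ^ q ^ 3) = 0 := by
    rw [← hs1, eval_det3]
    congr 1 <;> funext i <;> simp
  have g2 : d2 q (fun i => (M i).eval s) ≠ 0 := by
    rwa [← Polynomial.coe_evalRingHom, ← map_d2]
  rw [hMe] at g1 g2
  rw [hP]
  refine not_crit_of_dual hq hF (m := ![-(a * s + b), s, 1]) ?_ ?_ (by simp; ring) g1 g2
  · intro h
    simpa using congrFun h 0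
  · rw [← hP]
    exact fun _ => h1

end

/-! ### The criterion forces rationality -/

section
variable {k : Type*} [Field k] {p q : ℕ} [Fact p.Prime] [CharP k p]
  {F : MvPolynomial (Fin 3) k}

omit [CharP k p] in
theorem crit_smul [Infinite k] (hq : IsPow p q) (hF : IsDGZ q F) {P : Fin 3 → k} {c : k}
    (hc : c ≠ 0) (h : Crit F fun i => c * P i) : Crit F P := by
  have e : ∀ {A : Type _} [CommRing A] [Algebra k A] (u : Fin 3 → A),
      act ![![c, 0, 0], ![0, c, 0], ![0, 0, c]] u = fun i => algebraMap k A c * u i := by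
    intro A _ _ u
    funext i; fin_cases i <;> simp [act]
  refine crit_act ![![c, 0, 0], ![0, c, 0], ![0, 0, c]] ?_ (c ^ (q ^ 3 - q ^ 2))
    (pow_ne_zero _ hc) ?_ ?_
  · simp [det3, hc]
  · rw [e, hF.smul hq, aeval_X_left, ← map_pow]
    rfl
  · rw [e]; exact h

/-- The criterion is invariant under `GL₃(𝔽_q)`. -/
theorem crit_rat [Infinite k] (hq : IsPow p q) (hF : IsDGZ q F) {P Q : Fin 3 → k}
    (r : Fin 3 → Fin 3 → k) (hr : ∀ i j, r i j ^ q = r i j) (hdet : det3 (r 0) (r 1) (r 2) ≠ 0)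
    (hP : P = act r Q) (h : Crit F P) : Crit F Q := by
  subst hP
  refine crit_act r hdet 1 one_ne_zero ?_ h
  rw [hF.act_eq hq r hr hdet, C_1, one_mul]

theorem crit_affine [IsAlgClosed k] (hq : IsPow p q) (hF : IsDGZ q F) {a b : k}
    (hc : Crit F ![1, a, b]) : a ^ q = a ∧ b ^ q = b := by
  have hq1 := hq.one_lt
  have hq0 : q ≠ 0 := by omega
  have plane : ∀ α : k, Crit F ![1, α, 0] → α ^ q = α := by
    intro α hα
    by_contra h1
    by_cases h2 : α ^ q ^ 2 = α
    · exact not_crit_quad hq hF h1 h2 hα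
    · exact not_crit_quad' hq hF h2 hα
  by_cases h2 : d2 q ![1, a, b] = 0
  · by_cases ha : a ^ q = a
    · refine ⟨ha, plane b (crit_rat hq hF ![![1, 0, 0], ![a, 0, 1], ![0, 1, 0]] ?_ ?_ ?_ hc)⟩
      · intro i j; fin_cases i <;> fin_cases j <;> simp [hq0, ha]
      · simp [det3]
      · funext i; fin_cases i <;> simp [act]
    · exfalso
      have hA : a ^ q - a ≠ 0 := sub_ne_zero.2 ha
      -- `P` lies on the rational line `z = m x + l y`.
      obtain ⟨l, hl⟩ : ∃ l, l = (b ^ q - b) / (a ^ q - a) := ⟨_, rfl⟩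
      have hl' : l * (a ^ q - a) = b ^ q - b := by rw [hl]; field_simp
      have hA1 := hq.sub_pow (a ^ q) a 1
      have hB1 := hq.sub_pow (b ^ q) b 1
      rw [pow_one, ← pow_mul, ← sq] at hA1 hB1
      have hlq : l ^ q = l := by
        apply mul_left_cancel₀ (mul_ne_zero hA (pow_ne_zero q hA))
        have e : l ^ q * (a ^ q - a) ^ q = (b ^ q - b) ^ q := by rw [← mul_pow, hl']
        simp only [d2, det3, Pi.pow_apply, Matrix.cons_val, one_pow] at h2
        rw [hA1, hB1] at e
        rw [hA1]
        linear_combination (a ^ q - a) * e - (a ^ q ^ 2 - a ^ q) * hl' + h2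
      obtain ⟨m, hm⟩ : ∃ m, m = b - l * a := ⟨_, rfl⟩
      have hmq : m ^ q = m := by
        have := hq.sub_pow b (l * a) 1
        rw [pow_one, mul_pow, hlq] at this
        rw [hm, this]
        linear_combination -hl'
      refine ha (plane a (crit_rat hq hF ![![1, 0, 0], ![0, 1, 0], ![m, l, 1]] ?_ ?_ ?_ hc))
      · intro i j; fin_cases i <;> fin_cases j <;> simp [hq0, hlq, hmq]
      · simp [det3]
      · funext i; fin_cases i <;> simp [act, hm]
  · exfalso
    by_cases h1 : d1 q ![1, a, b] = 0
    -- `P = Φv` with `v` again on `C`.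
    · choose v hv using fun i : Fin 3 =>
        IsAlgClosed.exists_pow_nat_eq ((![1, a, b] : Fin 3 → k) i) (n := q) (by omega)
      have hvP : ![1, a, b] = v ^ q := by funext i; exact (hv i).symm
      have e1 := d1_pow hq v 1
      have e2 := d2_pow hq v 1
      rw [pow_one, ← hvP] at e1 e2
      rw [h1] at e1
      rw [e2] at h2
      have v1 : d1 q v = 0 := eq_zero_of_pow_eq_zero e1.symm
      have v2 : d2 q v ≠ 0 := fun h => h2 (by rw [h, zero_pow hq0])
      obtain ⟨x, y, hx, hxy⟩ := frob_rec hq v1 v2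
      by_cases hy : y = 0
      · refine not_crit_cycle hq hF (P := ![1, a, b]) (a := x ^ q) ?_ (pow_ne_zero _ hx) ?_ hc
        · rwa [e2]
        · intro i
          rw [hvP, Pi.pow_apply, ← pow_mul, mul_comm, pow_mul, hxy, hy, zero_mul, add_zero, mul_pow]
      · rw [hvP] at hc
        exact not_crit_generic hq hF v1 v2 hx hy hxy hc
    · exact not_crit_indep hq hF h2 h1 hc

theorem crit_rational [IsAlgClosed k] (hq : IsPow p q) (hF : IsDGZ q F) {P : Fin 3 → k}
    (hP : P ≠ 0) (hc : Crit F P) :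
    ∃ c : k, c ≠ 0 ∧ ∃ w : Fin 3 → k, (∀ i, w i ^ q = w i) ∧ ∀ i, P i = c * w i := by
  have hq0 : q ≠ 0 := by have := hq.one_lt; omega
  have main : ∀ R : Fin 3 → k, R 0 ≠ 0 → Crit F R →
      ∃ c : k, c ≠ 0 ∧ ∃ w : Fin 3 → k, (∀ i, w i ^ q = w i) ∧ ∀ i, R i = c * w i := by
    intro R h0 hR
    have e : ∀ i, R i = R 0 * (![1, R 1 / R 0, R 2 / R 0] : Fin 3 → k) i := by
      intro i; fin_cases i <;> simp <;> field_simp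
    have hR' : Crit F ![1, R 1 / R 0, R 2 / R 0] := by
      refine crit_smul hq hF h0 ?_
      rwa [← funext e]
    obtain ⟨h1, h2⟩ := crit_affine hq hF hR'
    refine ⟨R 0, h0, _, ?_, e⟩
    intro i; fin_cases i
    · simp
    · exact h1
    · exact h2
  by_cases h0 : P 0 = 0
  · by_cases h1 : P 1 = 0
    · have h2 : P 2 ≠ 0 := by
        intro h2; apply hP; funext i; fin_cases i <;> assumption
      obtain ⟨c, hc0, w, hw, h⟩ := main ![P 2, P 1, P 0] h2
        (crit_rat hq hF ![![0, 0, 1], ![0, 1, 0], ![1, 0, 0]]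
          (by intro i j; fin_cases i <;> fin_cases j <;> simp [hq0]) (by simp [det3])
          (by funext i; fin_cases i <;> simp [act]) hc)
      refine ⟨c, hc0, ![w 2, w 1, w 0], ?_, ?_⟩
      · intro i; fin_cases i <;> simp [hw]
      · intro i
        fin_cases i
        · exact h 2
        · exact h 1
        · exact h 0
    · obtain ⟨c, hc0, w, hw, h⟩ := main ![P 1, P 0, P 2] h1
        (crit_rat hq hF ![![0, 1, 0], ![1, 0, 0], ![0, 0, 1]]
          (by intro i j; fin_cases i <;> fin_cases j <;> simp [hq0]) (by simp [det3])
          (by funext i; fin_cases i <;> simp [act]) hc)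
      refine ⟨c, hc0, ![w 1, w 0, w 2], ?_, ?_⟩
      · intro i; fin_cases i <;> simp [hw]
      · intro i
        fin_cases i
        · exact h 1
        · exact h 0
        · exact h 2
  · exact main P h0 hc

end

/-! ### Descent to 𝔽_q -/

/-- The roots of `x ^ q = x` in `k` are the elements of `𝔽_q`. -/
theorem mem_range_of_pow {p n : ℕ} [Fact p.Prime] (hn : 0 < n) {x : DGZ_k p n}
    (hx : x ^ p ^ n = x) : ∃ w, algebraMap (GaloisField p n) (DGZ_k p n) w = x := by
  have hcard := GaloisField.card p n hn.ne'
  have hs := Polynomial.splits_X_pow_nat_card_sub_X (K := GaloisField p n)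
  have hr := hs.roots_map (algebraMap (GaloisField p n) (DGZ_k p n))
  have hmem : x ∈ ((Polynomial.X ^ Nat.card (GaloisField p n) - Polynomial.X :
      Polynomial (GaloisField p n)).map (algebraMap (GaloisField p n) (DGZ_k p n))).roots := by
    rw [Polynomial.mem_roots']
    constructor
    · refine (Polynomial.map_ne_zero_iff
        (algebraMap (GaloisField p n) (DGZ_k p n)).injective).2 ?_
      exact FiniteField.X_pow_card_sub_X_ne_zero _ Finite.one_lt_card
    · simp [hcard, hx]
  rw [hr, Multiset.mem_map] at hmem
  obtain ⟨w, -, hw⟩ := hmem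
  exact ⟨w, hw⟩

theorem isDGZ_Fbar {p n : ℕ} [Fact p.Prime]
    {F : MvPolynomial (Fin 3) (GaloisField p n)} (hF : DGZ_D2 p n * F = DGZ_D1 p n) :
    IsDGZ (p ^ n) (DGZ_Fbar p n F) := by
  have h1 : DGZ_D1 p n = d1 (p ^ n) X := by
    rw [DGZ_D1, Matrix.det_fin_three]
    simp [d1, det3]
    ring
  have h2 : DGZ_D2 p n = d2 (p ^ n) X := by
    rw [DGZ_D2, Matrix.det_fin_three]
    simp [d2, det3]
    ring
  rw [h1, h2] at hF
  have := congrArg (MvPolynomial.map (algebraMap (GaloisField p n) (DGZ_k p n))) hF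
  rw [map_mul, map_d1, map_d2] at this
  change d2 (p ^ n) X * _ = d1 (p ^ n) X
  simp only [MvPolynomial.map_X] at this
  exact this

/-- Every Galois point for the DGZ curve is `𝔽_q`-rational: `Δ(C) ⊆ ℙ²(𝔽_q)`. -/
theorem DGZ_galois_points_are_rational (p n : ℕ) [Fact p.Prime] (hn : 0 < n)
    (F : MvPolynomial (Fin 3) (GaloisField p n)) (hF : DGZ_D2 p n * F = DGZ_D1 p n)
    (L : Type) [Field L] [Algebra (DGZ_k p n) L]
    (φ : MvPolynomial (Fin 2) (DGZ_k p n) →ₐ[DGZ_k p n] L)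
    (hker : RingHom.ker φ.toRingHom = Ideal.span {DGZ_affine p n F})
    (hfrac : ∀ y : L, ∃ a b : MvPolynomial (Fin 2) (DGZ_k p n), φ b ≠ 0 ∧ y = φ a / φ b)
    (v : Fin 3 → DGZ_k p n) (hv : v ≠ 0)
    (hgal : DGZ_IsGaloisPoint p n L φ v) :
    ∃ (w : Fin 3 → GaloisField p n) (c : DGZ_k p n), c ≠ 0 ∧
      v = c • fun i => algebraMap (GaloisField p n) (DGZ_k p n) (w i) := by
  have hq : IsPow p (p ^ n) := ⟨n, hn, rfl⟩
  have : CharP (DGZ_k p n) p :=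
    charP_of_injective_algebraMap (algebraMap (GaloisField p n) (DGZ_k p n)).injective p
  have hF' := isDGZ_Fbar hF
  obtain ⟨c, hc, w, hw, hvw⟩ := crit_rational hq hF' hv
    (galois_crit hq hF' L φ hker hfrac v hgal)
  choose u hu using fun i => mem_range_of_pow hn (hw i)
  refine ⟨u, c, hc, ?_⟩
  funext i
  simp [hu, hvw]
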